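/- Let φ : 𝔻² → 𝔻² be holomorphic and C²-smooth on the closed bidisc. Then the composition operator C_φ is bounded on the Hardy space H²(𝔻²) if and only if for every ζ ∈ 𝕋² with φ(ζ) ∈ 𝕋², the complex derivative d_ζφ (the 2×2 complex Jacobian matrix at ζ) is invertible. -/

import Mathlib

open MeasureTheory Metric Set ENNReal

noncomputable section

/-- The open unit polydisc in `ℂⁿ`. -/
def polydisc (n : ℕ) : Set (Fin n → ℂ) := {z | ∀ j, ‖z j‖ < 1}

/-- The closed unit polydisc in `ℂⁿ`. -/
def closedPolydisc (n : ℕ) : Set (Fin n → ℂ) := {z | ∀ j, ‖z j‖ ≤ 1}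

/-- The distinguished boundary (torus) of the polydisc. -/
def torus (n : ℕ) : Set (Fin n → ℂ) := {z | ∀ j, ‖z j‖ = 1}

/-- The `(i,j)` entry `∂Φ_i/∂z_j(ζ)` of the complex Jacobian matrix of `Φ` at `ζ`
(computed via the derivative of the extension to the closed polydisc). -/
def jacEntry (n : ℕ) (Φ : (Fin n → ℂ) → (Fin n → ℂ)) (ζ : Fin n → ℂ) (i j : Fin n) : ℂ :=
  fderivWithin ℝ Φ (closedPolydisc n) ζ (Pi.single j 1) i

/-- The square of the Hardy space norm, `sup_{0<r<1} ∫_{𝕋ⁿ} |g(rξ)|² dσ(ξ)`. -/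
def hardySq (n : ℕ) (g : (Fin n → ℂ) → ℂ) : ℝ≥0∞ :=
  ⨆ r ∈ Set.Ioo (0:ℝ) 1,
    ∫⁻ θ in Set.univ.pi (fun _ : Fin n => Set.Icc (0:ℝ) 1),
      ENNReal.ofReal
        (‖g (fun j => (r : ℂ) * Complex.exp (2 * Real.pi * Complex.I * (θ j : ℂ)))‖ ^ 2)

/-- The composition operator `C_Φ` is bounded on the Hardy space `H²(𝔻ⁿ)`. -/
def bddHardy (n : ℕ) (Φ : (Fin n → ℂ) → (Fin n → ℂ)) : Prop :=
  ∃ C > (0:ℝ), ∀ f : (Fin n → ℂ) → ℂ, DifferentiableOn ℂ f (polydisc n) →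
    hardySq n (fun z => f (Φ z)) ≤ ENNReal.ofReal C * hardySq n f

/-! ### One-variable tools -/

/-- The parametrization of the unit circle. -/
def ee (t : ℝ) : ℂ := Complex.exp (2 * Real.pi * Complex.I * (t : ℂ))

/-- The Poisson kernel. -/
def PK (w η : ℂ) : ℝ := (1 - ‖w‖ ^ 2) / ‖η - w‖ ^ 2

lemma norm_ee (t : ℝ) : ‖ee t‖ = 1 := by
  unfold ee
  have : (2 * Real.pi * Complex.I * (t : ℂ)) = ((2 * Real.pi * t : ℝ) : ℂ) * Complex.I := by
    push_cast; ring
  rw [this, Complex.norm_exp_ofReal_mul_I]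

lemma ee_ne_zero (t : ℝ) : ee t ≠ 0 := Complex.exp_ne_zero _

lemma contDiff_ee {n : WithTop ℕ∞} : ContDiff ℝ n ee := by
  unfold ee
  have : ContDiff ℝ n (fun t : ℝ => (t : ℂ)) := Complex.ofRealCLM.contDiff
  exact (contDiff_const.mul this).cexp

lemma continuous_ee : Continuous ee := (contDiff_ee (n := 0)).continuous

lemma ee_periodic (t : ℝ) : ee (t + 1) = ee t := by
  unfold ee
  have : (2 * Real.pi * Complex.I * ((t + 1 : ℝ) : ℂ))
      = 2 * Real.pi * Complex.I * (t : ℂ) + 2 * Real.pi * Complex.I := by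
    push_cast; ring
  rw [this, Complex.exp_periodic]

lemma exists_ee {z : ℂ} (hz : ‖z‖ = 1) : ∃ t : ℝ, t ∈ Ico (1/2 : ℝ) (3/2) ∧ ee t = z := by
  have h1 := Complex.norm_mul_exp_arg_mul_I z
  rw [hz] at h1
  have hp := Real.pi_pos
  have h2 := Complex.arg_le_pi z
  have h3 := Complex.neg_pi_lt_arg z
  have key : ∀ k : ℤ, ee (Complex.arg z / (2 * Real.pi) + k) = z := by
    intro k
    unfold ee
    have : (2 * Real.pi * Complex.I * ((Complex.arg z / (2 * Real.pi) + k : ℝ) : ℂ))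
      = Complex.arg z * Complex.I + k * (2 * Real.pi * Complex.I) := by
      have : (Real.pi : ℂ) ≠ 0 := by exact_mod_cast hp.ne'
      push_cast; field_simp
    rw [this, Complex.exp_periodic.int_mul k]
    simpa using h1
  have hlo : -(1/2) < Complex.arg z / (2 * Real.pi) := by
    rw [lt_div_iff₀ (by positivity)]; linarith
  have hhi : Complex.arg z / (2 * Real.pi) ≤ 1/2 := by
    rw [div_le_iff₀ (by positivity)]; linarith
  rcases hhi.lt_or_eq with h | h
  · refine ⟨_, ⟨?_, ?_⟩, key 1⟩ <;> push_cast <;> linarith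
  · refine ⟨_, ⟨?_, ?_⟩, key 0⟩ <;> push_cast <;> linarith

/-- Cauchy formula in the normalized parametrization. -/
lemma cauchy_ee {u : ℂ → ℂ} (hu : DifferentiableOn ℂ u (closedBall 0 1)) {w : ℂ} (hw : ‖w‖ < 1) :
    ∫ t in (0:ℝ)..1, ee t / (ee t - w) * u (ee t) = u w := by
  have h := hu.circleIntegral_sub_inv_smul (w := w) (by simpa using hw)
  rw [circleIntegral] at h
  have hp : (2 * Real.pi : ℝ) ≠ 0 := by positivity
  have hpc : (2 * Real.pi * Complex.I : ℂ) ≠ 0 := by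
    simp [Real.pi_ne_zero]
  have h2 := intervalIntegral.integral_comp_mul_left (a := 0) (b := 1)
    (fun θ : ℝ => deriv (circleMap 0 1) θ • (circleMap 0 1 θ - w)⁻¹ • u (circleMap 0 1 θ)) hp
  rw [mul_zero, mul_one, h] at h2
  have h3 : ∀ t : ℝ, circleMap 0 1 (2 * Real.pi * t) = ee t := by
    intro t; unfold circleMap ee; push_cast; simp; congr 1; ring
  have h4 : ∀ t : ℝ, deriv (circleMap 0 1) (2 * Real.pi * t) •
      (circleMap 0 1 (2 * Real.pi * t) - w)⁻¹ • u (circleMap 0 1 (2 * Real.pi * t))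
      = Complex.I * (ee t / (ee t - w) * u (ee t)) := by
    intro t
    rw [deriv_circleMap, h3]
    simp only [smul_eq_mul]
    ring
  simp only [h4] at h2
  rw [intervalIntegral.integral_const_mul] at h2
  have h5 : (2 * Real.pi : ℝ)⁻¹ • (2 * Real.pi * Complex.I : ℂ) • u w = Complex.I * u w := by
    rw [Complex.real_smul, smul_eq_mul]
    have : (Real.pi : ℂ) ≠ 0 := by exact_mod_cast Real.pi_ne_zero
    push_cast; field_simp
  rw [h5] at h2
  exact mul_left_cancel₀ Complex.I_ne_zero h2

lemma cont_u_ee {u : ℂ → ℂ} (hu : ContinuousOn u (closedBall 0 1)) :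
    Continuous fun t : ℝ => u (ee t) := by
  apply hu.comp_continuous continuous_ee
  intro t; simp [norm_ee]

lemma ee_sub_ne {w : ℂ} (hw : ‖w‖ < 1) (t : ℝ) : ee t - w ≠ 0 := by
  intro h
  have : ee t = w := sub_eq_zero.1 h
  have h2 := norm_ee t
  rw [this] at h2; linarith

lemma PK_nonneg {w η : ℂ} (hw : ‖w‖ ≤ 1) : 0 ≤ PK w η := by
  unfold PK
  apply div_nonneg _ (by positivity)
  nlinarith [norm_nonneg w]

lemma setLI_eq {g : ℝ → ℝ} (hg : Continuous g) (h0 : ∀ t, 0 ≤ g t) :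
    ∫⁻ t in Icc (0:ℝ) 1, ENNReal.ofReal (g t) = ENNReal.ofReal (∫ t in (0:ℝ)..1, g t) := by
  rw [intervalIntegral.integral_of_le zero_le_one, ← integral_Icc_eq_integral_Ioc,
    ofReal_integral_eq_lintegral_ofReal]
  · exact hg.continuousOn.integrableOn_compact isCompact_Icc
  · exact Filter.Eventually.of_forall h0

lemma norm_one_sub_conj {w η : ℂ} (hη : ‖η‖ = 1) :
    ‖1 - (starRingEnd ℂ) w * η‖ = ‖η - w‖ := by
  have h1 : η * (starRingEnd ℂ) η = 1 := by
    rw [Complex.mul_conj, Complex.normSq_eq_norm_sq, hη]; simp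
  have : 1 - (starRingEnd ℂ) w * η = η * (starRingEnd ℂ) (η - w) := by
    rw [map_sub, mul_sub, h1]; ring
  rw [this, norm_mul, hη, one_mul, RCLike.norm_conj]

/-- Poisson-type subharmonicity inequality. -/
lemma poisson1 {u : ℂ → ℂ} (hu : DifferentiableOn ℂ u (closedBall 0 1)) {w : ℂ} (hw : ‖w‖ < 1) :
    ENNReal.ofReal (‖u w‖ ^ 2) ≤
      ∫⁻ t in Icc (0:ℝ) 1, ENNReal.ofReal (PK w (ee t)) * ENNReal.ofReal (‖u (ee t)‖ ^ 2) := by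
  have hne : ∀ z ∈ closedBall (0:ℂ) 1, 1 - (starRingEnd ℂ) w * z ≠ 0 := by
    intro z hz h
    have h1 : (starRingEnd ℂ) w * z = 1 := (sub_eq_zero.1 h).symm
    have h2 : ‖w‖ * ‖z‖ = 1 := by
      rw [← RCLike.norm_conj w, ← norm_mul, h1, norm_one]
    have h3 : ‖z‖ ≤ 1 := by simpa using hz
    nlinarith [norm_nonneg w, norm_nonneg z]
  let v : ℂ → ℂ := fun z => u z ^ 2 * ((1 - ‖w‖ ^ 2 : ℝ) : ℂ) / (1 - (starRingEnd ℂ) w * z)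
  have hv : DifferentiableOn ℂ v (closedBall 0 1) := by
    apply DifferentiableOn.div _ _ hne
    · exact (hu.pow 2).mul_const _
    · fun_prop
  have hc := cauchy_ee hv hw
  have hvw : v w = u w ^ 2 := by
    have h1 : (starRingEnd ℂ) w * w = ((‖w‖ ^ 2 : ℝ) : ℂ) := by
      rw [mul_comm, Complex.mul_conj, Complex.normSq_eq_norm_sq]
    have h2 := hne w (by simpa using hw.le)
    simp only [v]
    rw [h1] at h2 ⊢
    push_cast at h2 ⊢
    field_simp
  have hnorm : ∀ t, ‖ee t / (ee t - w) * v (ee t)‖ = PK w (ee t) * ‖u (ee t)‖ ^ 2 := by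
    intro t
    have h1 : (0:ℝ) ≤ 1 - ‖w‖ ^ 2 := by nlinarith [norm_nonneg w]
    simp only [v, norm_mul, norm_div, norm_pow, norm_ee, norm_one_sub_conj (norm_ee t), PK,
      Complex.norm_real, Real.norm_eq_abs, abs_of_nonneg h1]
    have := norm_pos_iff.2 (ee_sub_ne hw t)
    field_simp
  have hcont : Continuous fun t => PK w (ee t) * ‖u (ee t)‖ ^ 2 := by
    apply Continuous.mul
    · unfold PK
      apply Continuous.div continuous_const
      · exact ((continuous_ee.sub continuous_const).norm).pow 2
      · intro t
        have := norm_pos_iff.2 (ee_sub_ne hw t)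
        positivity
    · exact (cont_u_ee hu.continuousOn).norm.pow 2
  have h1 : ‖u w‖ ^ 2 ≤ ∫ t in (0:ℝ)..1, PK w (ee t) * ‖u (ee t)‖ ^ 2 := by
    rw [← norm_pow, ← hvw, ← hc]
    refine (intervalIntegral.norm_integral_le_integral_norm zero_le_one).trans ?_
    simp only [hnorm]; exact le_rfl
  have h2 : ∀ t, ENNReal.ofReal (PK w (ee t)) * ENNReal.ofReal (‖u (ee t)‖ ^ 2)
      = ENNReal.ofReal (PK w (ee t) * ‖u (ee t)‖ ^ 2) := fun t =>
    (ENNReal.ofReal_mul (PK_nonneg hw.le)).symm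
  simp only [h2]
  rw [setLI_eq hcont (fun t => mul_nonneg (PK_nonneg hw.le) (by positivity))]
  exact ENNReal.ofReal_le_ofReal h1

/-- Mean value property for the real part. -/
lemma posmean {u : ℂ → ℂ} (hu : DifferentiableOn ℂ u (closedBall 0 1))
    (h0 : ∀ t, 0 ≤ (u (ee t)).re) :
    ∫⁻ t in Icc (0:ℝ) 1, ENNReal.ofReal (u (ee t)).re = ENNReal.ofReal (u 0).re := by
  have hc := cauchy_ee hu (w := 0) (by simp)
  have h1 : ∀ t, ee t / (ee t - 0) * u (ee t) = u (ee t) := by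
    intro t; rw [sub_zero, div_self (ee_ne_zero t), one_mul]
  simp only [h1] at hc
  have hcont := cont_u_ee hu.continuousOn
  rw [setLI_eq (g := fun t => (u (ee t)).re) (Complex.continuous_re.comp hcont) h0, ← hc]
  congr 1
  exact Complex.reCLM.intervalIntegral_comp_comm (hcont.intervalIntegrable 0 1)

lemma PK_eq_re {w η : ℂ} (hη : ‖η‖ = 1) : PK w η = ((η + w) / (η - w)).re := by
  unfold PK
  rw [Complex.div_re]
  have h1 : η.re ^ 2 + η.im ^ 2 = 1 := by
    rw [← Complex.sq_norm_sub_sq_re η, hη]; ring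
  have h2 : ‖w‖ ^ 2 = w.re ^ 2 + w.im ^ 2 := by
    rw [← Complex.normSq_eq_norm_sq, Complex.normSq_apply]; ring
  rw [h2, ← Complex.normSq_eq_norm_sq, ← add_div]
  congr 1
  simp only [Complex.add_re, Complex.sub_re, Complex.add_im, Complex.sub_im]
  nlinarith

lemma PK_le {w η : ℂ} (hη : ‖η‖ = 1) (hw : ‖w‖ < 1) : PK w η ≤ 2 / (1 - ‖w‖) := by
  have h1 : 1 - ‖w‖ ≤ ‖η - w‖ := by
    have := norm_sub_norm_le η w; rw [hη] at this; exact this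
  have h2 : 0 < 1 - ‖w‖ := by linarith
  have h4 : 0 < ‖η - w‖ := by linarith
  unfold PK
  rw [div_le_div_iff₀ (by positivity) h2]
  have h3 : (1 - ‖w‖) ^ 2 ≤ ‖η - w‖ ^ 2 := by gcongr
  nlinarith [norm_nonneg w]

/-- Normalization of the Poisson kernel. -/
lemma PK_int {ρ : ℝ} (h0 : 0 ≤ ρ) (h1 : ρ < 1) {η : ℂ} (hη : ‖η‖ = 1) :
    ∫⁻ t in Icc (0:ℝ) 1, ENNReal.ofReal (PK ((ρ:ℂ) * ee t) η) = 1 := by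
  have hn : ∀ t, ‖(ρ:ℂ) * ee t‖ < 1 := by
    intro t; rw [norm_mul, norm_ee, Complex.norm_real, Real.norm_eq_abs, abs_of_nonneg h0]
    linarith
  have := posmean (u := fun z => (η + ρ * z) / (η - ρ * z)) ?_ ?_
  · simp only [← PK_eq_re hη] at this
    rw [this]
    simp [PK, hη]
  · apply DifferentiableOn.div (by fun_prop) (by fun_prop)
    intro z hz h
    have h3 : ‖z‖ ≤ 1 := by simpa using hz
    have h4 : η = ρ * z := sub_eq_zero.1 h
    have h5 := hη
    rw [h4, norm_mul, Complex.norm_real, Real.norm_eq_abs, abs_of_nonneg h0] at h5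
    nlinarith [norm_nonneg z]
  · intro t
    rw [← PK_eq_re hη]
    exact PK_nonneg (hn t).le


/-! ### Two-variable tools -/

/-- The parametrization of the two-torus. -/
def XX (θ : Fin 2 → ℝ) : Fin 2 → ℂ := fun j => ee (θ j)

/-- The parameter cube. -/
def cube : Set (Fin 2 → ℝ) := Set.univ.pi (fun _ : Fin 2 => Set.Icc (0:ℝ) 1)

lemma measurableSet_cube : MeasurableSet cube :=
  MeasurableSet.univ_pi fun _ => measurableSet_Icc

lemma isCompact_cube : IsCompact cube := isCompact_univ_pi fun _ => isCompact_Icc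

lemma contDiff_XX {n : WithTop ℕ∞} : ContDiff ℝ n XX := by
  unfold XX
  rw [contDiff_pi]
  intro j
  exact contDiff_ee.comp (contDiff_apply ℝ ℝ j)

lemma continuous_XX : Continuous XX := (contDiff_XX (n := 0)).continuous

lemma XX_mem_torus (θ : Fin 2 → ℝ) : XX θ ∈ torus 2 := fun _ => norm_ee _

lemma XX_mem_closed (θ : Fin 2 → ℝ) : XX θ ∈ closedPolydisc 2 := fun _ => (norm_ee _).le

lemma cube_lintegral {g : (Fin 2 → ℝ) → ℝ≥0∞} (hg : Measurable g) :
    ∫⁻ θ in cube, g θ = ∫⁻ x in Icc (0:ℝ) 1, ∫⁻ y in Icc (0:ℝ) 1, g ![x, y] := by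
  have h1 : (volume : Measure (Fin 2 → ℝ)).restrict cube
      = Measure.pi (fun _ => (volume : Measure ℝ).restrict (Icc 0 1)) := by
    rw [volume_pi]; exact Measure.restrict_pi_pi _ _
  rw [h1]
  have h2 := (measurePreserving_finTwoArrow ((volume : Measure ℝ).restrict (Icc 0 1))).symm
  rw [← h2.lintegral_comp hg, lintegral_prod]
  · rfl
  · exact (hg.comp (MeasurableEquiv.measurable _)).aemeasurable

lemma measurable_PK {α : Type*} [MeasurableSpace α] {f g : α → ℂ} (hf : Measurable f)
    (hg : Measurable g) : Measurable (fun a => ENNReal.ofReal (PK (f a) (g a))) := by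
  unfold PK
  exact ((measurable_const.sub (hf.norm.pow_const 2)).div
    ((hg.sub hf).norm.pow_const 2)).ennreal_ofReal

lemma slice0 {F : (Fin 2 → ℂ) → ℂ} (hF : DifferentiableOn ℂ F (closedPolydisc 2)) {b : ℂ}
    (hb : ‖b‖ ≤ 1) : DifferentiableOn ℂ (fun z => F ![z, b]) (closedBall 0 1) := by
  refine hF.comp (f := fun z : ℂ => ![z, b]) ?_ ?_
  · rw [differentiableOn_pi]
    intro i; fin_cases i
    · exact differentiableOn_id
    · exact differentiableOn_const b
  · intro z hz
    intro j; fin_cases j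
    · simpa using hz
    · simpa using hb

lemma slice1 {F : (Fin 2 → ℂ) → ℂ} (hF : DifferentiableOn ℂ F (closedPolydisc 2)) {a : ℂ}
    (ha : ‖a‖ ≤ 1) : DifferentiableOn ℂ (fun z => F ![a, z]) (closedBall 0 1) := by
  refine hF.comp (f := fun z : ℂ => ![a, z]) ?_ ?_
  · rw [differentiableOn_pi]
    intro i; fin_cases i
    · exact differentiableOn_const a
    · exact differentiableOn_id
  · intro z hz
    intro j; fin_cases j
    · simpa using ha
    · simpa using hz

lemma cont_F_XX {F : (Fin 2 → ℂ) → ℂ} (hF : ContinuousOn F (closedPolydisc 2)) :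
    Continuous fun θ => F (XX θ) := hF.comp_continuous continuous_XX XX_mem_closed

lemma vec_eta (w : Fin 2 → ℂ) : w = ![w 0, w 1] := by
  ext i; fin_cases i <;> rfl

lemma XX_vec (x y : ℝ) : XX ![x, y] = ![ee x, ee y] := by
  ext i; fin_cases i <;> rfl

lemma poisson2 {F : (Fin 2 → ℂ) → ℂ} (hF : DifferentiableOn ℂ F (closedPolydisc 2))
    {w : Fin 2 → ℂ} (hw : w ∈ polydisc 2) :
    ENNReal.ofReal (‖F w‖ ^ 2) ≤ ∫⁻ θ in cube, ENNReal.ofReal (PK (w 0) (XX θ 0)) *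
      ENNReal.ofReal (PK (w 1) (XX θ 1)) * ENNReal.ofReal (‖F (XX θ)‖ ^ 2) := by
  have hXm := continuous_XX.measurable
  have hX0 : Measurable fun θ => XX θ 0 := (measurable_pi_apply 0).comp hXm
  have hX1 : Measurable fun θ => XX θ 1 := (measurable_pi_apply 1).comp hXm
  have m1 : ∀ (a : ℂ) (j : Fin 2), Measurable fun θ => ENNReal.ofReal (PK a (XX θ j)) := by
    intro a j
    exact measurable_PK measurable_const ((measurable_pi_apply j).comp hXm)
  rw [cube_lintegral]
  · simp only [XX_vec]
    have h1 := poisson1 (slice0 hF (hw 1).le) (hw 0)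
    rw [← vec_eta] at h1
    refine h1.trans (lintegral_mono fun x => ?_)
    have h2 := poisson1 (slice1 hF (norm_ee x).le) (hw 1)
    simp only [Matrix.cons_val_zero, Matrix.cons_val_one]
    simp only [mul_assoc]
    rw [lintegral_const_mul']
    · gcongr
    · exact ENNReal.ofReal_ne_top
  · exact ((m1 _ 0).mul (m1 _ 1)).mul
      ((cont_F_XX hF.continuousOn).norm.pow 2).measurable.ennreal_ofReal

lemma schur {F : (Fin 2 → ℂ) → ℂ} (hF : DifferentiableOn ℂ F (closedPolydisc 2))
    {w : (Fin 2 → ℝ) → (Fin 2 → ℂ)} (hwc : Continuous w) (hw : ∀ θ, w θ ∈ polydisc 2)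
    {C : ℝ≥0∞} (hC : ∀ η ∈ torus 2, ∫⁻ θ in cube, ENNReal.ofReal (PK (w θ 0) (η 0)) *
      ENNReal.ofReal (PK (w θ 1) (η 1)) ≤ C) :
    ∫⁻ θ in cube, ENNReal.ofReal (‖F (w θ)‖ ^ 2) ≤
      C * ∫⁻ θ in cube, ENNReal.ofReal (‖F (XX θ)‖ ^ 2) := by
  have hXm := continuous_XX.measurable
  have mF : Measurable fun θ => ENNReal.ofReal (‖F (XX θ)‖ ^ 2) :=
    ((cont_F_XX hF.continuousOn).norm.pow 2).measurable.ennreal_ofReal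
  have m1 : ∀ j : Fin 2, Measurable fun p : (Fin 2 → ℝ) × (Fin 2 → ℝ) =>
      ENNReal.ofReal (PK (w p.1 j) (XX p.2 j)) := by
    intro j
    refine measurable_PK ?_ ?_
    · exact (measurable_pi_apply j).comp (hwc.measurable.comp measurable_fst)
    · exact (measurable_pi_apply j).comp (hXm.comp measurable_snd)
  calc ∫⁻ θ in cube, ENNReal.ofReal (‖F (w θ)‖ ^ 2)
      ≤ ∫⁻ θ in cube, ∫⁻ τ in cube, ENNReal.ofReal (PK (w θ 0) (XX τ 0)) *
      ENNReal.ofReal (PK (w θ 1) (XX τ 1)) * ENNReal.ofReal (‖F (XX τ)‖ ^ 2) :=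
        lintegral_mono fun θ => poisson2 hF (hw θ)
    _ = ∫⁻ τ in cube, ∫⁻ θ in cube, ENNReal.ofReal (PK (w θ 0) (XX τ 0)) *
      ENNReal.ofReal (PK (w θ 1) (XX τ 1)) * ENNReal.ofReal (‖F (XX τ)‖ ^ 2) := by
        rw [lintegral_lintegral_swap]
        exact (((m1 0).mul (m1 1)).mul (mF.comp measurable_snd)).aemeasurable
    _ ≤ ∫⁻ τ in cube, C * ENNReal.ofReal (‖F (XX τ)‖ ^ 2) := by
        refine lintegral_mono fun τ => ?_
        simp only
        rw [lintegral_mul_const' _ _ ENNReal.ofReal_ne_top]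
        gcongr
        exact hC _ (XX_mem_torus τ)
    _ = C * ∫⁻ θ in cube, ENNReal.ofReal (‖F (XX θ)‖ ^ 2) := lintegral_const_mul _ mF

/-- Dilations. -/
lemma diff_dilate {f : (Fin 2 → ℂ) → ℂ} (hf : DifferentiableOn ℂ f (polydisc 2)) {R : ℝ}
    (h0 : 0 ≤ R) (h1 : R < 1) :
    DifferentiableOn ℂ (fun z : Fin 2 → ℂ => f (fun j => (R:ℂ) * z j)) (closedPolydisc 2) := by
  refine hf.comp (f := fun z : Fin 2 → ℂ => fun j => (R:ℂ) * z j) ?_ ?_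
  · fun_prop
  · intro z hz j
    have := hz j
    simp only [norm_mul, Complex.norm_real, Real.norm_eq_abs, abs_of_nonneg h0]
    nlinarith [norm_nonneg (z j)]

/-- Integral means over tori. -/
def MM (g : (Fin 2 → ℂ) → ℂ) (r : ℝ) : ℝ≥0∞ :=
  ∫⁻ θ in cube, ENNReal.ofReal (‖g (fun j => (r:ℂ) * XX θ j)‖ ^ 2)

lemma hardySq_eq (g : (Fin 2 → ℂ) → ℂ) : hardySq 2 g = ⨆ r ∈ Set.Ioo (0:ℝ) 1, MM g r := rfl

lemma prod_cube {a b : ℝ → ℝ≥0∞} (ha : Measurable a) (hb : Measurable b) :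
    ∫⁻ θ in cube, a (θ 0) * b (θ 1)
      = (∫⁻ t in Icc (0:ℝ) 1, a t) * ∫⁻ t in Icc (0:ℝ) 1, b t := by
  rw [cube_lintegral (g := fun θ => a (θ 0) * b (θ 1))]
  · simp only [Matrix.cons_val_zero, Matrix.cons_val_one]
    rw [← lintegral_mul_const _ ha]
    refine lintegral_congr fun x => ?_
    rw [lintegral_const_mul _ hb]
  · exact (ha.comp (measurable_pi_apply 0)).mul (hb.comp (measurable_pi_apply 1))

lemma MM_mono {g : (Fin 2 → ℂ) → ℂ} (hg : DifferentiableOn ℂ g (polydisc 2)) {r s : ℝ}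
    (h0 : 0 < r) (h1 : r < s) (h2 : s < 1) : MM g r ≤ MM g s := by
  have hs : 0 < s := h0.trans h1
  have hρ0 : 0 ≤ r / s := by positivity
  have hρ1 : r / s < 1 := by rw [div_lt_one hs]; exact h1
  have mP : ∀ η : ℂ, Measurable fun t : ℝ => ENNReal.ofReal (PK (((r / s : ℝ) : ℂ) * ee t) η) := by
    intro η
    refine measurable_PK ?_ measurable_const
    exact (continuous_const.mul continuous_ee).measurable
  have := schur (diff_dilate hg hs.le h2) (w := fun θ j => ((r / s : ℝ) : ℂ) * XX θ j) (C := 1)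
    ?_ ?_ ?_
  · rw [one_mul] at this
    refine le_trans (le_of_eq ?_) this
    unfold MM
    refine lintegral_congr fun θ => ?_
    congr 4
    ext j
    have : (s : ℂ) ≠ 0 := by exact_mod_cast hs.ne'
    push_cast; field_simp
  · refine continuous_pi fun j => continuous_const.mul ?_
    exact (continuous_apply j).comp continuous_XX
  · intro θ j
    have : ‖XX θ j‖ = 1 := norm_ee _
    simp only [norm_mul, Complex.norm_real, Real.norm_eq_abs, abs_of_nonneg hρ0, this]
    linarith
  · intro η hη
    refine le_of_eq ?_
    rw [show (1:ℝ≥0∞) = 1 * 1 by simp]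
    nth_rewrite 1 [← PK_int hρ0 hρ1 (hη 0)]
    rw [← PK_int hρ0 hρ1 (hη 1)]
    exact prod_cube (mP _) (mP _)

/-! ### The real-variable kernel estimate -/

/-- The (unnormalized) Cauchy kernel. -/
def cc (e t : ℝ) : ℝ := e / (e ^ 2 + t ^ 2)

lemma cc_nonneg {e t : ℝ} (he : 0 ≤ e) : 0 ≤ cc e t := by unfold cc; positivity

lemma cc_bound {E e t K : ℝ} (hE : 0 ≤ E) (he : 0 ≤ e) (hK : 0 ≤ K)
    (h1 : E ≤ 2 * e + K * t ^ 2) (h2 : e ≤ 2 * E + K * t ^ 2) :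
    cc E t ≤ (48 + 5 * K) * (cc e t + 1) := by
  have hc := cc_nonneg (t := t) he
  rcases le_or_gt (2 * K * t ^ 2) e with h | h
  · have hEe : e / 4 ≤ E := by nlinarith
    have hE3 : E ≤ 3 * e := by nlinarith
    have : cc E t ≤ 48 * cc e t := by
      rcases he.eq_or_lt with h0 | h0
      · have : E = 0 := by linarith
        unfold cc; rw [this, ← h0]; simp
      · unfold cc
        have hEp : 0 < E := by linarith
        rw [← mul_div_assoc, div_le_div_iff₀ (by positivity) (by positivity)]
        have e2 : e ^ 2 / 16 ≤ E ^ 2 := by nlinarith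
        have h5 : E * (e ^ 2 + t ^ 2) ≤ 3 * e * (e ^ 2 + t ^ 2) := by gcongr
        have h6 : e * (e ^ 2 / 16) ≤ e * E ^ 2 := by gcongr
        have h7 : 0 ≤ e * t ^ 2 := by positivity
        nlinarith
    nlinarith
  · have ht : 0 < t ^ 2 := by
      rcases (sq_nonneg t).eq_or_lt with h0 | h0
      · rw [← h0] at h; linarith
      · exact h0
    have : cc E t ≤ 5 * K := by
      unfold cc
      rw [div_le_iff₀ (by positivity)]
      nlinarith [mul_nonneg hK (sq_nonneg E)]
    nlinarith

lemma measurable_cc {α : Type*} [MeasurableSpace α] {f g : α → ℝ} (hf : Measurable f)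
    (hg : Measurable g) : Measurable fun a => ENNReal.ofReal (cc (f a) (g a) + 1) := by
  unfold cc
  exact ((hf.div ((hf.pow_const 2).add (hg.pow_const 2))).add_const 1).ennreal_ofReal

lemma cc_int {e : ℝ} (he : 0 ≤ e) (s : ℝ) :
    ∫⁻ x in Icc (-1:ℝ) 1, ENNReal.ofReal (cc e (x - s) + 1) ≤ ENNReal.ofReal (Real.pi + 2) := by
  have h1 : ∫⁻ x : ℝ, ENNReal.ofReal (cc e (x - s)) ≤ ENNReal.ofReal Real.pi := by
    rcases he.eq_or_lt with h0 | h0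
    · simp [cc, ← h0]
    · have := ProbabilityTheory.lintegral_cauchyPDF_eq_one s (γ := e.toNNReal)
        (by simpa using h0)
      have h2 : ∀ x, ENNReal.ofReal (cc e (x - s))
          = ENNReal.ofReal Real.pi * ProbabilityTheory.cauchyPDF s e.toNNReal x := by
        intro x
        rw [ProbabilityTheory.cauchyPDF_def, ProbabilityTheory.cauchyPDFReal_def]
        rw [← ENNReal.ofReal_mul Real.pi_pos.le]
        congr 1
        have := Real.pi_pos
        simp only [cc, Real.coe_toNNReal e he]
        have h3 : (x - s) ^ 2 + e ^ 2 ≠ 0 := by positivity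
        have h4 : e ^ 2 + (x - s) ^ 2 ≠ 0 := by positivity
        field_simp
        try ring
      simp only [h2]
      rw [lintegral_const_mul', this, mul_one]
      exact ENNReal.ofReal_ne_top
  calc ∫⁻ x in Icc (-1:ℝ) 1, ENNReal.ofReal (cc e (x - s) + 1)
      = ∫⁻ x in Icc (-1:ℝ) 1, (ENNReal.ofReal (cc e (x - s)) + 1) := by
        refine lintegral_congr fun x => ?_
        rw [ENNReal.ofReal_add (cc_nonneg he) zero_le_one, ENNReal.ofReal_one]
    _ = (∫⁻ x in Icc (-1:ℝ) 1, ENNReal.ofReal (cc e (x - s)))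
          + ∫⁻ x in Icc (-1:ℝ) 1, 1 := by
        rw [lintegral_add_right _ measurable_const]
    _ ≤ ENNReal.ofReal Real.pi + ENNReal.ofReal 2 := by
        gcongr
        · exact (setLIntegral_le_lintegral _ _).trans h1
        · simp; norm_num
    _ = _ := (ENNReal.ofReal_add Real.pi_pos.le (by norm_num)).symm

lemma box_lintegral (J : Set ℝ) {g : (Fin 2 → ℝ) → ℝ≥0∞} (hg : Measurable g) :
    ∫⁻ θ in Set.univ.pi (fun _ : Fin 2 => J), g θ = ∫⁻ x in J, ∫⁻ y in J, g ![x, y] := by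
  have h1 : (volume : Measure (Fin 2 → ℝ)).restrict (Set.univ.pi (fun _ : Fin 2 => J))
      = Measure.pi (fun _ => (volume : Measure ℝ).restrict J) := by
    rw [volume_pi]; exact Measure.restrict_pi_pi _ _
  rw [h1]
  have h2 := (measurePreserving_finTwoArrow ((volume : Measure ℝ).restrict J)).symm
  rw [← h2.lintegral_comp hg, lintegral_prod]
  · rfl
  · exact (hg.comp (MeasurableEquiv.measurable _)).aemeasurable

lemma box_lintegral_symm (J : Set ℝ) {g : (Fin 2 → ℝ) → ℝ≥0∞} (hg : Measurable g) :
    ∫⁻ θ in Set.univ.pi (fun _ : Fin 2 => J), g θ = ∫⁻ y in J, ∫⁻ x in J, g ![x, y] := by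
  rw [box_lintegral J hg, lintegral_lintegral_swap]
  refine Measurable.aemeasurable ?_
  have : Measurable fun p : ℝ × ℝ => ![p.1, p.2] := by
    rw [measurable_pi_iff]
    intro i; fin_cases i
    · exact measurable_fst
    · exact measurable_snd
  exact hg.comp this

lemma kernel_est {E₀ E₁ : (Fin 2 → ℝ) → ℝ} {K : ℝ} (hK : 0 ≤ K)
    (m0 : Measurable E₀) (m1 : Measurable E₁) (p0 : ∀ α, 0 ≤ E₀ α) (p1 : ∀ α, 0 ≤ E₁ α)
    (q0 : ∀ α β, E₀ α ≤ 2 * E₀ β + K * ‖α - β‖ ^ 2)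
    (q1 : ∀ α β, E₁ α ≤ 2 * E₁ β + K * ‖α - β‖ ^ 2) (s : Fin 2 → ℝ) :
    ∫⁻ α in Set.univ.pi (fun _ : Fin 2 => Icc (-1:ℝ) 1),
      ENNReal.ofReal (cc (E₀ α) (α 0 - s 0) * cc (E₁ α) (α 1 - s 1))
      ≤ ENNReal.ofReal ((48 + 5 * K) ^ 2 * (2 * (Real.pi + 2) ^ 2)) := by
  set J := Icc (-1:ℝ) 1 with hJ
  set D := 48 + 5 * K with hD
  have hD0 : 0 ≤ D := by positivity
  have hvec : ∀ a b : ℝ, Measurable fun α : Fin 2 → ℝ => ![s 0, α 1] := by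
    intro a b
    rw [measurable_pi_iff]
    intro i; fin_cases i
    · exact measurable_const
    · exact measurable_pi_apply 1
  have hvec' : Measurable fun α : Fin 2 → ℝ => ![α 0, s 1] := by
    rw [measurable_pi_iff]
    intro i; fin_cases i
    · exact measurable_pi_apply 0
    · exact measurable_const
  let A : (Fin 2 → ℝ) → ℝ≥0∞ := fun α =>
    ENNReal.ofReal (cc (E₀ ![s 0, α 1]) (α 0 - s 0) + 1) * ENNReal.ofReal (cc (E₁ s) (α 1 - s 1) + 1)
  let B : (Fin 2 → ℝ) → ℝ≥0∞ := fun α =>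
    ENNReal.ofReal (cc (E₀ s) (α 0 - s 0) + 1) * ENNReal.ofReal (cc (E₁ ![α 0, s 1]) (α 1 - s 1) + 1)
  have t0 : Measurable fun α : Fin 2 → ℝ => α 0 - s 0 := (measurable_pi_apply 0).sub_const _
  have t1 : Measurable fun α : Fin 2 → ℝ => α 1 - s 1 := (measurable_pi_apply 1).sub_const _
  have mA : Measurable A :=
    (measurable_cc (m0.comp (hvec 0 0)) t0).mul (measurable_cc measurable_const t1)
  have mB : Measurable B :=
    (measurable_cc measurable_const t0).mul (measurable_cc (m1.comp hvec') t1)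
  have hsq : ∀ α β : Fin 2 → ℝ, ∀ t : ℝ, (∀ i, |α i - β i| ≤ |t|) → ‖α - β‖ ^ 2 ≤ t ^ 2 := by
    intro α β t h
    rw [← sq_abs t]
    gcongr
    rw [pi_norm_le_iff_of_nonneg (abs_nonneg t)]
    exact h
  -- comparison of the two functions with frozen values
  have cmp : ∀ (E : (Fin 2 → ℝ) → ℝ), (∀ α, 0 ≤ E α) →
      (∀ α β, E α ≤ 2 * E β + K * ‖α - β‖ ^ 2) → ∀ (α β : Fin 2 → ℝ) (t : ℝ),
      (∀ i, |α i - β i| ≤ |t|) → cc (E α) t ≤ D * (cc (E β) t + 1) := by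
    intro E hp hq α β t h
    apply cc_bound (hp _) (hp _) hK
    · refine (hq α β).trans ?_
      have := hsq α β t h
      gcongr
    · refine (hq β α).trans ?_
      have := hsq α β t h
      rw [norm_sub_rev]
      gcongr
  have pw : ∀ α, ENNReal.ofReal (cc (E₀ α) (α 0 - s 0) * cc (E₁ α) (α 1 - s 1))
      ≤ ENNReal.ofReal (D ^ 2) * (A α + B α) := by
    intro α
    have c0 : cc (E₀ α) (α 0 - s 0) ≤ D * (cc (E₀ ![s 0, α 1]) (α 0 - s 0) + 1) := by
      apply cmp E₀ p0 q0
      intro i; fin_cases i <;> simp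
    have c1 : cc (E₁ α) (α 1 - s 1) ≤ D * (cc (E₁ ![α 0, s 1]) (α 1 - s 1) + 1) := by
      apply cmp E₁ p1 q1
      intro i; fin_cases i <;> simp
    rcases le_total |α 0 - s 0| |α 1 - s 1| with h | h
    · have c2 : cc (E₁ α) (α 1 - s 1) ≤ D * (cc (E₁ s) (α 1 - s 1) + 1) := by
        apply cmp E₁ p1 q1
        intro i; fin_cases i
        · exact h
        · exact le_rfl
      have hn0 := cc_nonneg (t := α 0 - s 0) (p0 ![s 0, α 1])
      have hn1 := cc_nonneg (t := α 1 - s 1) (p1 s)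
      calc _ ≤ ENNReal.ofReal ((D * (cc (E₀ ![s 0, α 1]) (α 0 - s 0) + 1)) *
              (D * (cc (E₁ s) (α 1 - s 1) + 1))) := by
            apply ENNReal.ofReal_le_ofReal
            exact mul_le_mul c0 c2 (cc_nonneg (p1 _)) (by positivity)
        _ = ENNReal.ofReal (D ^ 2) * A α := by
            simp only [A]
            rw [← ENNReal.ofReal_mul (by positivity), ← ENNReal.ofReal_mul (by positivity)]
            congr 1; ring
        _ ≤ _ := by gcongr; exact le_self_add
    · have c2 : cc (E₀ α) (α 0 - s 0) ≤ D * (cc (E₀ s) (α 0 - s 0) + 1) := by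
        apply cmp E₀ p0 q0
        intro i; fin_cases i
        · exact le_rfl
        · exact h
      have hn0 := cc_nonneg (t := α 0 - s 0) (p0 s)
      have hn1 := cc_nonneg (t := α 1 - s 1) (p1 ![α 0, s 1])
      calc _ ≤ ENNReal.ofReal ((D * (cc (E₀ s) (α 0 - s 0) + 1)) *
              (D * (cc (E₁ ![α 0, s 1]) (α 1 - s 1) + 1))) := by
            apply ENNReal.ofReal_le_ofReal
            exact mul_le_mul c2 c1 (cc_nonneg (p1 _)) (by positivity)
        _ = ENNReal.ofReal (D ^ 2) * B α := by
            simp only [B]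
            rw [← ENNReal.ofReal_mul (by positivity), ← ENNReal.ofReal_mul (by positivity)]
            congr 1; ring
        _ ≤ _ := by gcongr; exact le_add_self
  have iA : ∫⁻ α in Set.univ.pi (fun _ : Fin 2 => J), A α
      ≤ ENNReal.ofReal (Real.pi + 2) * ENNReal.ofReal (Real.pi + 2) := by
    rw [box_lintegral_symm J mA]
    simp only [A, Matrix.cons_val_zero, Matrix.cons_val_one]
    calc _ ≤ ∫⁻ y in J, ENNReal.ofReal (Real.pi + 2) *
            ENNReal.ofReal (cc (E₁ s) (y - s 1) + 1) := by
          refine lintegral_mono fun y => ?_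
          simp only
          rw [lintegral_mul_const' _ _ ENNReal.ofReal_ne_top]
          gcongr
          exact cc_int (p0 _) _
      _ ≤ _ := by
          rw [lintegral_const_mul' _ _ ENNReal.ofReal_ne_top]
          gcongr
          exact cc_int (p1 _) _
  have iB : ∫⁻ α in Set.univ.pi (fun _ : Fin 2 => J), B α
      ≤ ENNReal.ofReal (Real.pi + 2) * ENNReal.ofReal (Real.pi + 2) := by
    rw [box_lintegral J mB]
    simp only [B, Matrix.cons_val_zero, Matrix.cons_val_one]
    calc _ ≤ ∫⁻ x in J, ENNReal.ofReal (cc (E₀ s) (x - s 0) + 1) *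
            ENNReal.ofReal (Real.pi + 2) := by
          refine lintegral_mono fun y => ?_
          simp only
          rw [lintegral_const_mul' _ _ ENNReal.ofReal_ne_top]
          gcongr
          exact cc_int (p1 _) _
      _ ≤ _ := by
          rw [lintegral_mul_const' _ _ ENNReal.ofReal_ne_top]
          gcongr
          exact cc_int (p0 _) _
  calc _ ≤ ∫⁻ α in Set.univ.pi (fun _ : Fin 2 => J), ENNReal.ofReal (D ^ 2) * (A α + B α) :=
        lintegral_mono pw
    _ = ENNReal.ofReal (D ^ 2) * ((∫⁻ α in Set.univ.pi (fun _ : Fin 2 => J), A α) +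
          ∫⁻ α in Set.univ.pi (fun _ : Fin 2 => J), B α) := by
        rw [lintegral_const_mul' _ _ ENNReal.ofReal_ne_top, lintegral_add_left mA]
    _ ≤ ENNReal.ofReal (D ^ 2) * (ENNReal.ofReal (Real.pi + 2) * ENNReal.ofReal (Real.pi + 2)
          + ENNReal.ofReal (Real.pi + 2) * ENNReal.ofReal (Real.pi + 2)) := by gcongr
    _ = _ := by
        have := Real.pi_pos
        rw [← ENNReal.ofReal_mul (by positivity), ← ENNReal.ofReal_add (by positivity)
          (by positivity), ← ENNReal.ofReal_mul (by positivity)]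
        congr 1; ring

/-! ### The local estimate at points mapped to the torus -/

lemma slow_of_C2 {h : (Fin 2 → ℝ) → ℝ} (hh : ContDiff ℝ 2 h) (hp : ∀ θ, 0 ≤ h θ)
    (θ₀ : Fin 2 → ℝ) : ∃ ε > 0, ∃ K : ℝ, 0 ≤ K ∧ ∀ θ ∈ ball θ₀ ε, ∀ θ' ∈ ball θ₀ ε,
      h θ' ≤ 2 * h θ + K * ‖θ' - θ‖ ^ 2 := by
  have h1 : ContDiff ℝ 1 (fderiv ℝ h) := hh.fderiv_right (by norm_num)
  obtain ⟨K, t, ht, hK⟩ := (h1.contDiffAt (x := θ₀)).exists_lipschitzOnWith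
  obtain ⟨ε, hε, hεt⟩ := Metric.mem_nhds_iff.1 ht
  refine ⟨ε / 3, by positivity, 2 * K, by positivity, ?_⟩
  intro θ hθ θ' hθ'
  set v := θ' - θ with hv
  have hvn : ‖v‖ < 2 * ε / 3 := by
    rw [hv, ← dist_eq_norm]
    have := dist_triangle_right θ' θ θ₀
    rw [mem_ball] at hθ hθ'
    linarith
  have hmem : ∀ s : ℝ, |s| ≤ 1 → θ + s • v ∈ t := by
    intro s hs
    apply hεt
    rw [mem_ball, dist_eq_norm] at *
    have : θ + s • v - θ₀ = (θ - θ₀) + s • v := by abel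
    rw [this]
    refine (norm_add_le _ _).trans_lt ?_
    rw [norm_smul, Real.norm_eq_abs]
    nlinarith [norm_nonneg v, abs_nonneg s]
  have hd : Differentiable ℝ h := hh.differentiable (by norm_num)
  let g : ℝ → ℝ := fun s => h (θ + s • v) + h (θ + (-s) • v)
  have hg : ∀ s, HasDerivAt g ((fderiv ℝ h (θ + s • v)) v - (fderiv ℝ h (θ + (-s) • v)) v) s := by
    intro s
    have a1 : HasDerivAt (fun s : ℝ => θ + s • v) v s := by
      simpa using ((hasDerivAt_id s).smul_const v).const_add θ
    have a2 : HasDerivAt (fun s : ℝ => θ + (-s) • v) (-v) s := by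
      simpa using ((hasDerivAt_id s).neg.smul_const v).const_add θ
    have b1 := (hd (θ + s • v)).hasFDerivAt.comp_hasDerivAt s a1
    have b2 := (hd (θ + (-s) • v)).hasFDerivAt.comp_hasDerivAt s a2
    have := b1.add b2
    rw [map_neg, ← sub_eq_add_neg] at this
    exact this
  have key := norm_image_sub_le_of_norm_deriv_le_segment_01' (f := g) (C := 2 * K * ‖v‖ ^ 2)
    (fun x _ => (hg x).hasDerivWithinAt) ?_
  · rw [Real.norm_eq_abs] at key
    have k2 := (le_abs_self _).trans key
    have g1 : g 1 = h θ' + h (θ + (-1 : ℝ) • v) := by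
      simp only [g, one_smul, hv]; congr 2; abel
    have g0 : g 0 = 2 * h θ := by simp only [g]; simp; ring
    have := hp (θ + (-1 : ℝ) • v)
    linarith
  · intro s hs
    rw [← sub_apply]
    refine (ContinuousLinearMap.le_opNorm _ _).trans ?_
    have hs' : |s| ≤ 1 := by rw [abs_of_nonneg hs.1]; exact hs.2.le
    have := hK.norm_sub_le (hmem s hs') (hmem (-s) (by rwa [abs_neg]))
    have e1 : θ + s • v - (θ + (-s) • v) = (2 * s) • v := by
      rw [add_sub_add_left_eq_sub, ← sub_smul]; congr 1; ring
    rw [e1, norm_smul, Real.norm_eq_abs, abs_mul, abs_two] at this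
    have k3 : (K:ℝ) * (2 * |s| * ‖v‖) ≤ K * (2 * 1 * ‖v‖) := by gcongr
    calc _ ≤ (K * (2 * 1 * ‖v‖)) * ‖v‖ := by gcongr; exact this.trans k3
      _ = _ := by ring

lemma ext_fun {N : Set (Fin 2 → ℝ)} (hN : N.Nonempty) {Ψ : (Fin 2 → ℝ) → (Fin 2 → ℝ)}
    {h : (Fin 2 → ℝ) → ℝ} (hp : ∀ θ, 0 ≤ h θ) {K : ℝ} (hK : 0 ≤ K)
    (hs : ∀ θ ∈ N, ∀ θ' ∈ N, h θ' ≤ 2 * h θ + K * ‖Ψ θ' - Ψ θ‖ ^ 2) :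
    ∃ E : (Fin 2 → ℝ) → ℝ, Measurable E ∧ (∀ α, 0 ≤ E α) ∧
      (∀ α β, E α ≤ 2 * E β + (2 * K) * ‖α - β‖ ^ 2) ∧
      ∀ θ ∈ N, h θ ≤ E (Ψ θ) ∧ E (Ψ θ) ≤ 2 * h θ := by
  have : Nonempty N := hN.to_subtype
  let F : N → (Fin 2 → ℝ) → ℝ := fun θ α => 2 * h θ + K * ‖α - Ψ θ‖ ^ 2
  have hF : ∀ θ α, 0 ≤ F θ α := by
    intro θ α
    have := hp θ
    simp only [F]; positivity
  have hb : ∀ α, BddBelow (range fun θ => F θ α) := by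
    intro α
    refine ⟨0, ?_⟩
    rintro _ ⟨θ, rfl⟩
    exact hF θ α
  refine ⟨fun α => ⨅ θ, F θ α, ?_, fun α => le_ciInf fun θ => hF θ α, ?_, ?_⟩
  · apply UpperSemicontinuous.measurable
    apply upperSemicontinuous_ciInf hb
    intro θ
    apply Continuous.upperSemicontinuous
    simp only [F]
    fun_prop
  · intro α β
    have : (⨅ θ, F θ α - (2 * K) * ‖α - β‖ ^ 2 / 1) ≤ 2 * ⨅ θ, F θ β := by
      rw [Real.mul_iInf_of_nonneg (by norm_num)]
      refine le_ciInf fun θ => ?_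
      refine (ciInf_le ?_ θ).trans ?_
      · refine ⟨-((2 * K) * ‖α - β‖ ^ 2 / 1), ?_⟩
        rintro _ ⟨θ, rfl⟩
        have := hF θ α
        simp only; linarith
      · simp only [F]
        have t : ‖α - Ψ θ‖ ≤ ‖α - β‖ + ‖β - Ψ θ‖ := norm_sub_le_norm_sub_add_norm_sub _ _ _
        have t2 : ‖α - Ψ θ‖ ^ 2 ≤ 2 * ‖α - β‖ ^ 2 + 2 * ‖β - Ψ θ‖ ^ 2 := by
          have : ‖α - Ψ θ‖ ^ 2 ≤ (‖α - β‖ + ‖β - Ψ θ‖) ^ 2 := by gcongr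
          nlinarith [sq_nonneg (‖α - β‖ - ‖β - Ψ θ‖)]
        have := hp θ
        nlinarith
    have h2 : (⨅ θ, F θ α) - (2 * K) * ‖α - β‖ ^ 2 / 1 ≤ ⨅ θ, (F θ α - (2 * K) * ‖α - β‖ ^ 2 / 1) :=
      le_ciInf fun θ => sub_le_sub_right (ciInf_le (hb α) θ) _
    simp only
    linarith
  · intro θ hθ
    constructor
    · refine le_ciInf fun θ' => ?_
      exact hs θ' θ'.2 θ hθ
    · refine (ciInf_le (hb _) ⟨θ, hθ⟩).trans ?_
      simp [F]

lemma PK_cc {w η η₀ : ℂ} {R E : ℝ} (hR : R ∈ Ico (1/2 : ℝ) 1) (hw : ‖w‖ ≤ 1) (hη : ‖η‖ = 1)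
    (hη₀ : ‖η₀‖ = 1) (h1 : 1 - R ^ 2 * ‖w‖ ^ 2 ≤ E) (h2 : E ≤ 2 * (1 - R ^ 2 * ‖w‖ ^ 2)) :
    PK ((R:ℂ) * w) η ≤ 32 * cc E (((starRingEnd ℂ) η₀ * w).im - ((starRingEnd ℂ) η₀ * η).im / R) := by
  have hR0 : 0 < R := by have := hR.1; linarith
  have hR1 := hR.2
  set x := ((starRingEnd ℂ) η₀ * w).im - ((starRingEnd ℂ) η₀ * η).im / R with hx
  set h := 1 - R ^ 2 * ‖w‖ ^ 2 with hh
  have hRw : ‖(R:ℂ) * w‖ = R * ‖w‖ := by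
    rw [norm_mul, Complex.norm_real, Real.norm_eq_abs, abs_of_pos hR0]
  have hRw1 : R * ‖w‖ < 1 := by nlinarith [norm_nonneg w]
  have hRw0 : 0 ≤ R * ‖w‖ := by positivity
  have hfac : h = (1 - R * ‖w‖) * (1 + R * ‖w‖) := by rw [hh]; ring
  have hpos : 0 < h := by rw [hfac]; apply _root_.mul_pos <;> linarith
  have n1 : h / 2 ≤ ‖η - R * w‖ := by
    have := norm_sub_norm_le η (R * w)
    rw [hη, hRw] at this
    nlinarith
  have n2 : |x| / 2 ≤ ‖η - R * w‖ := by
    have e1 : ‖η - R * w‖ = ‖(starRingEnd ℂ) η₀ * (R * w - η)‖ := by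
      rw [norm_mul, RCLike.norm_conj, hη₀, one_mul, norm_sub_rev]
    have e2 : ((starRingEnd ℂ) η₀ * (R * w - η)).im = R * x := by
      rw [hx]
      have : (starRingEnd ℂ) η₀ * (R * w - η) = (R:ℂ) * ((starRingEnd ℂ) η₀ * w)
        - (starRingEnd ℂ) η₀ * η := by ring
      rw [this, Complex.sub_im, Complex.im_ofReal_mul]
      field_simp
    rw [e1]
    refine le_trans ?_ (Complex.abs_im_le_norm _)
    rw [e2, abs_mul, abs_of_pos hR0]
    nlinarith [abs_nonneg x, hR.1]
  have hE : 0 < E := by linarith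
  have n3 : (h ^ 2 + x ^ 2) / 8 ≤ ‖η - R * w‖ ^ 2 := by
    have a1 : (h / 2) ^ 2 ≤ ‖η - R * w‖ ^ 2 := by gcongr
    have a2 : (|x| / 2) ^ 2 ≤ ‖η - R * w‖ ^ 2 := by gcongr
    rw [div_pow, sq_abs] at a2
    nlinarith
  have n4 : (E ^ 2 + x ^ 2) / 32 ≤ ‖η - R * w‖ ^ 2 := by
    have : E ^ 2 ≤ 4 * h ^ 2 := by nlinarith
    nlinarith [sq_nonneg x]
  unfold PK cc
  rw [hRw, show 1 - (R * ‖w‖) ^ 2 = h by rw [hh]; ring]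
  calc h / ‖η - R * w‖ ^ 2 ≤ E / ((E ^ 2 + x ^ 2) / 32) := by gcongr
    _ = _ := by field_simp


lemma local_core {Φ : (Fin 2 → ℝ) → (Fin 2 → ℂ)} (hΦ : ContDiff ℝ 2 Φ)
    (hle : ∀ θ i, ‖Φ θ i‖ ≤ 1) {η₀ : Fin 2 → ℂ} (hη₀ : ∀ i, ‖η₀ i‖ = 1) (θ₀ : Fin 2 → ℝ)
    (hdet : (fderiv ℝ (fun θ : Fin 2 → ℝ =>
      (fun i => ((starRingEnd ℂ) (η₀ i) * Φ θ i).im : Fin 2 → ℝ)) θ₀).det ≠ 0) :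
    ∃ N ∈ nhds θ₀, ∃ C : ℝ, ∀ R ∈ Ico (1/2 : ℝ) 1, ∀ η ∈ torus 2,
      ∫⁻ θ in N, ENNReal.ofReal (PK ((R:ℂ) * Φ θ 0) (η 0)) *
        ENNReal.ofReal (PK ((R:ℂ) * Φ θ 1) (η 1)) ≤ ENNReal.ofReal C := by
  set Ψ : (Fin 2 → ℝ) → (Fin 2 → ℝ) :=
    fun θ => (fun i => ((starRingEnd ℂ) (η₀ i) * Φ θ i).im : Fin 2 → ℝ) with hΨdef
  have hΦi : ∀ i, ContDiff ℝ 2 fun θ => Φ θ i := fun i => contDiff_pi.1 hΦ i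
  have hΨ : ContDiff ℝ 2 Ψ := by
    rw [contDiff_pi]
    intro i
    exact Complex.imCLM.contDiff.comp (contDiff_const.mul (hΦi i))
  have hh : ∀ i, ContDiff ℝ 2 fun θ => 1 - ‖Φ θ i‖ ^ 2 := fun i =>
    contDiff_const.sub ((hΦi i).norm_sq ℝ)
  have hhp : ∀ i θ, 0 ≤ 1 - ‖Φ θ i‖ ^ 2 := fun i θ => by
    nlinarith [hle θ i, norm_nonneg (Φ θ i)]
  -- antilipschitz
  obtain ⟨L, hL0, ε₁, hε₁, hanti⟩ : ∃ L : ℝ, 0 ≤ L ∧ ∃ ε > 0, ∀ θ ∈ ball θ₀ ε, ∀ θ' ∈ ball θ₀ ε,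
      ‖θ' - θ‖ ≤ L * ‖Ψ θ' - Ψ θ‖ := by
    have hst : HasStrictFDerivAt Ψ (((fderiv ℝ Ψ θ₀).toContinuousLinearEquivOfDetNeZero hdet :
        (Fin 2 → ℝ) ≃L[ℝ] (Fin 2 → ℝ)) : (Fin 2 → ℝ) →L[ℝ] (Fin 2 → ℝ)) θ₀ := by
      rw [ContinuousLinearMap.coe_toContinuousLinearEquivOfDetNeZero]
      exact hΨ.contDiffAt.hasStrictFDerivAt (by norm_num)
    obtain ⟨s, hs, hso, happ⟩ := hst.approximates_deriv_on_open_nhds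
    obtain ⟨ε, hε, hεs⟩ := Metric.isOpen_iff.1 hso θ₀ hs
    have hal := happ.antilipschitz
      (((fderiv ℝ Ψ θ₀).toContinuousLinearEquivOfDetNeZero hdet).subsingleton_or_nnnorm_symm_pos.imp
        id fun hf' => NNReal.half_lt_self (inv_pos.2 hf').ne')
    obtain ⟨L', hL'⟩ : ∃ L' : NNReal, AntilipschitzWith L' (s.domRestrict Ψ) := ⟨_, hal⟩
    refine ⟨(L' : ℝ), NNReal.coe_nonneg _, ε, hε, fun θ hθ θ' hθ' => ?_⟩
    have := hL'.le_mul_dist ⟨θ', hεs hθ'⟩ ⟨θ, hεs hθ⟩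
    rw [Subtype.dist_eq, dist_eq_norm, dist_eq_norm] at this
    exact this
  -- determinant bound
  set d := |(fderiv ℝ Ψ θ₀).det| / 2 with hd
  have hd0 : 0 < d := by have := abs_pos.2 hdet; positivity
  obtain ⟨ε₂, hε₂, hdetb⟩ : ∃ ε > 0, ∀ θ ∈ ball θ₀ ε, d ≤ |(fderiv ℝ Ψ θ).det| := by
    have hc : Continuous fun θ => |(fderiv ℝ Ψ θ).det| :=
      (ContinuousLinearMap.continuous_det.comp (hΨ.continuous_fderiv (by norm_num))).abs
    have : ∀ᶠ θ in nhds θ₀, d < |(fderiv ℝ Ψ θ).det| :=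
      hc.continuousAt.eventually (lt_mem_nhds (by
        have := abs_pos.2 hdet; rw [hd]; linarith))
    obtain ⟨ε, hε, h⟩ := Metric.eventually_nhds_iff_ball.1 this
    exact ⟨ε, hε, fun θ hθ => (h θ hθ).le⟩
  obtain ⟨ε₃, hε₃, K₀, hK₀, hs0⟩ := slow_of_C2 (hh 0) (hhp 0) θ₀
  obtain ⟨ε₄, hε₄, K₁, hK₁, hs1⟩ := slow_of_C2 (hh 1) (hhp 1) θ₀
  set ε := min (min ε₁ ε₂) (min ε₃ ε₄) with hε
  have hεpos : 0 < ε := by positivity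
  have s1 : ball θ₀ ε ⊆ ball θ₀ ε₁ := ball_subset_ball ((min_le_left _ _).trans (min_le_left _ _))
  have s2 : ball θ₀ ε ⊆ ball θ₀ ε₂ := ball_subset_ball ((min_le_left _ _).trans (min_le_right _ _))
  have s3 : ball θ₀ ε ⊆ ball θ₀ ε₃ := ball_subset_ball ((min_le_right _ _).trans (min_le_left _ _))
  have s4 : ball θ₀ ε ⊆ ball θ₀ ε₄ := ball_subset_ball ((min_le_right _ _).trans (min_le_right _ _))
  set N := ball θ₀ ε with hN
  set K := max K₀ K₁ * L ^ 2 with hK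
  have hKpos : 0 ≤ K := by have := hK₀.trans (le_max_left K₀ K₁); positivity
  have hslow : ∀ (h : (Fin 2 → ℝ) → ℝ) (k : ℝ), 0 ≤ k → k ≤ max K₀ K₁ → ∀ R ∈ Ico (1/2 : ℝ) 1,
      (∀ θ ∈ N, ∀ θ' ∈ N, 1 - h θ' ≤ 2 * (1 - h θ) + k * ‖θ' - θ‖ ^ 2) →
      ∀ θ ∈ N, ∀ θ' ∈ N, 1 - R ^ 2 * h θ' ≤ 2 * (1 - R ^ 2 * h θ) + K * ‖Ψ θ' - Ψ θ‖ ^ 2 := by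
    intro h k hk0 hk R hR hs θ hθ θ' hθ'
    have a1 := hs θ hθ θ' hθ'
    have a2 := hanti θ (s1 hθ) θ' (s1 hθ')
    have a3 : k * ‖θ' - θ‖ ^ 2 ≤ K * ‖Ψ θ' - Ψ θ‖ ^ 2 := by
      rw [hK, mul_assoc, ← mul_pow]
      have : 0 ≤ max K₀ K₁ := hk0.trans hk
      gcongr
    have hR1 : R ^ 2 ≤ 1 := by nlinarith [hR.1, hR.2]
    have a4 : 0 ≤ K * ‖Ψ θ' - Ψ θ‖ ^ 2 := by positivity
    nlinarith [mul_le_mul_of_nonneg_left (a1.trans (add_le_add_right a3 _)) (sq_nonneg R)]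
  have hinj : InjOn Ψ N := by
    intro x hx y hy hxy
    have := hanti x (s1 hx) y (s1 hy)
    rw [hxy, sub_self, norm_zero, mul_zero] at this
    exact (sub_eq_zero.1 (norm_le_zero_iff.1 this)).symm
  refine ⟨N, ball_mem_nhds _ hεpos,
    1024 * d⁻¹ * ((48 + 5 * (2 * K)) ^ 2 * (2 * (Real.pi + 2) ^ 2)), ?_⟩
  intro R hR η hη
  have hR0 : 0 < R := by have := hR.1; linarith
  have hNne : N.Nonempty := ⟨θ₀, mem_ball_self hεpos⟩
  have hpR : ∀ i θ, 0 ≤ 1 - R ^ 2 * ‖Φ θ i‖ ^ 2 := by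
    intro i θ
    have := hhp i θ
    have hR1 : R ^ 2 ≤ 1 := by nlinarith [hR.1, hR.2]
    nlinarith [sq_nonneg ‖Φ θ i‖]
  obtain ⟨E₀, mE₀, pE₀, qE₀, cE₀⟩ := ext_fun hNne (Ψ := Ψ)
    (h := fun θ => 1 - R ^ 2 * ‖Φ θ 0‖ ^ 2) (hpR 0) hKpos
    (hslow (fun θ => ‖Φ θ 0‖ ^ 2) K₀ hK₀ (le_max_left _ _) R hR
      fun θ hθ θ' hθ' => hs0 θ (s3 hθ) θ' (s3 hθ'))
  obtain ⟨E₁, mE₁, pE₁, qE₁, cE₁⟩ := ext_fun hNne (Ψ := Ψ)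
    (h := fun θ => 1 - R ^ 2 * ‖Φ θ 1‖ ^ 2) (hpR 1) hKpos
    (hslow (fun θ => ‖Φ θ 1‖ ^ 2) K₁ hK₁ (le_max_right _ _) R hR
      fun θ hθ θ' hθ' => hs1 θ (s4 hθ) θ' (s4 hθ'))
  let s : Fin 2 → ℝ := fun i => ((starRingEnd ℂ) (η₀ i) * η i).im / R
  let G : (Fin 2 → ℝ) → ℝ≥0∞ := fun α =>
    ENNReal.ofReal (cc (E₀ α) (α 0 - s 0) * cc (E₁ α) (α 1 - s 1))
  have hker := kernel_est (K := 2 * K) (by positivity) mE₀ mE₁ pE₀ pE₁ qE₀ qE₁ s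
  have hRn : ∀ θ i, ‖(R:ℂ) * Φ θ i‖ ≤ 1 := by
    intro θ i
    rw [norm_mul, Complex.norm_real, Real.norm_eq_abs, abs_of_pos hR0]
    nlinarith [hle θ i, norm_nonneg (Φ θ i), hR.2]
  have pw : ∀ θ ∈ N, ENNReal.ofReal (PK ((R:ℂ) * Φ θ 0) (η 0)) *
        ENNReal.ofReal (PK ((R:ℂ) * Φ θ 1) (η 1)) ≤
        ENNReal.ofReal (1024 * d⁻¹) * (ENNReal.ofReal |(fderiv ℝ Ψ θ).det| * G (Ψ θ)) := by
    intro θ hθ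
    have p0 := PK_cc hR (hle θ 0) (hη 0) (hη₀ 0) (cE₀ θ hθ).1 (cE₀ θ hθ).2
    have p1 := PK_cc hR (hle θ 1) (hη 1) (hη₀ 1) (cE₁ θ hθ).1 (cE₁ θ hθ).2
    have n0 := cc_nonneg (t := Ψ θ 0 - s 0) (pE₀ (Ψ θ))
    have n1 := cc_nonneg (t := Ψ θ 1 - s 1) (pE₁ (Ψ θ))
    change _ ≤ 32 * cc (E₀ (Ψ θ)) (Ψ θ 0 - s 0) at p0
    change _ ≤ 32 * cc (E₁ (Ψ θ)) (Ψ θ 1 - s 1) at p1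
    simp only [G]
    rw [← ENNReal.ofReal_mul (PK_nonneg (hRn θ 0)), ← ENNReal.ofReal_mul (abs_nonneg _),
      ← ENNReal.ofReal_mul (by positivity)]
    apply ENNReal.ofReal_le_ofReal
    have hdd := hdetb θ (s2 hθ)
    have one : 1 ≤ d⁻¹ * |(fderiv ℝ Ψ θ).det| := by
      rw [inv_mul_eq_div, one_le_div hd0]; exact hdd
    calc _ ≤ (32 * cc (E₀ (Ψ θ)) (Ψ θ 0 - s 0)) * (32 * cc (E₁ (Ψ θ)) (Ψ θ 1 - s 1)) :=
          mul_le_mul p0 p1 (PK_nonneg (hRn θ 1)) (by positivity)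
      _ = 1 * (1024 * (cc (E₀ (Ψ θ)) (Ψ θ 0 - s 0) * cc (E₁ (Ψ θ)) (Ψ θ 1 - s 1))) := by ring
      _ ≤ (d⁻¹ * |(fderiv ℝ Ψ θ).det|) *
          (1024 * (cc (E₀ (Ψ θ)) (Ψ θ 0 - s 0) * cc (E₁ (Ψ θ)) (Ψ θ 1 - s 1))) := by
          gcongr
      _ = _ := by ring
  have himg : Ψ '' N ⊆ Set.univ.pi (fun _ : Fin 2 => Icc (-1:ℝ) 1) := by
    rintro _ ⟨θ, _, rfl⟩ i _
    have h1 : |Ψ θ i| ≤ 1 := by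
      refine (Complex.abs_im_le_norm _).trans ?_
      rw [norm_mul, RCLike.norm_conj, hη₀, one_mul]
      exact hle θ i
    exact abs_le.1 h1
  calc _ ≤ ∫⁻ θ in N, ENNReal.ofReal (1024 * d⁻¹) *
        (ENNReal.ofReal |(fderiv ℝ Ψ θ).det| * G (Ψ θ)) :=
        setLIntegral_mono' measurableSet_ball pw
    _ = ENNReal.ofReal (1024 * d⁻¹) * ∫⁻ α in Ψ '' N, G α := by
        rw [lintegral_const_mul' _ _ ENNReal.ofReal_ne_top,
          lintegral_image_eq_lintegral_abs_det_fderiv_mul volume measurableSet_ball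
            (fun x _ => ((hΨ.differentiable (by norm_num)) x).hasFDerivAt.hasFDerivWithinAt) hinj]
    _ ≤ ENNReal.ofReal (1024 * d⁻¹) *
          ENNReal.ofReal ((48 + 5 * (2 * K)) ^ 2 * (2 * (Real.pi + 2) ^ 2)) := by
        gcongr
        exact (lintegral_mono_set himg).trans hker
    _ = _ := (ENNReal.ofReal_mul (by positivity)).symm


lemma polydisc_eq (n : ℕ) : polydisc n = ball 0 1 := by
  ext z
  rw [mem_ball_zero_iff, pi_norm_lt_iff zero_lt_one]; rfl

lemma closedPolydisc_eq (n : ℕ) : closedPolydisc n = closedBall 0 1 := by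
  ext z
  rw [mem_closedBall_zero_iff, pi_norm_le_iff_of_nonneg zero_le_one]; rfl

lemma closure_polydisc (n : ℕ) : closure (polydisc n) = closedPolydisc n := by
  rw [polydisc_eq, closedPolydisc_eq, closure_ball _ one_ne_zero]

lemma polydisc_sub (n : ℕ) : polydisc n ⊆ closedPolydisc n := fun _ hz j => (hz j).le

lemma isOpen_polydisc (n : ℕ) : IsOpen (polydisc n) := by rw [polydisc_eq]; exact isOpen_ball

lemma uniqueDiff_closed (n : ℕ) : UniqueDiffOn ℝ (closedPolydisc n) := by
  rw [closedPolydisc_eq]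
  refine uniqueDiffOn_convex (convex_closedBall _ _) ?_
  rw [interior_closedBall _ one_ne_zero]
  exact ⟨0, mem_ball_self one_pos⟩

section basics

variable {φ : (Fin 2 → ℂ) → (Fin 2 → ℂ)}

lemma map_closed (hsm : ContDiffOn ℝ 2 φ (closedPolydisc 2))
    (hmap : ∀ z ∈ polydisc 2, φ z ∈ polydisc 2) :
    ∀ z ∈ closedPolydisc 2, φ z ∈ closedPolydisc 2 := by
  have h : MapsTo φ (polydisc 2) (polydisc 2) := hmap
  have h2 := h.closure_of_continuousOn (by rw [closure_polydisc]; exact hsm.continuousOn)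
  rw [closure_polydisc] at h2
  exact h2

lemma contDiff_Phi (hsm : ContDiffOn ℝ 2 φ (closedPolydisc 2)) :
    ContDiff ℝ 2 fun θ => φ (XX θ) :=
  hsm.comp_contDiff contDiff_XX XX_mem_closed

lemma D_I (hhol : DifferentiableOn ℂ φ (polydisc 2))
    (hsm : ContDiffOn ℝ 2 φ (closedPolydisc 2)) {z : Fin 2 → ℂ} (hz : z ∈ closedPolydisc 2)
    (v : Fin 2 → ℂ) :
    fderivWithin ℝ φ (closedPolydisc 2) z (Complex.I • v) =
      Complex.I • fderivWithin ℝ φ (closedPolydisc 2) z v := by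
  have hc := hsm.continuousOn_fderivWithin (uniqueDiff_closed 2) (by norm_num)
  have h1 : EqOn (fun z => fderivWithin ℝ φ (closedPolydisc 2) z (Complex.I • v))
      (fun z => Complex.I • fderivWithin ℝ φ (closedPolydisc 2) z v) (polydisc 2) := by
    intro z hz
    have hn : polydisc 2 ∈ nhds z := (isOpen_polydisc 2).mem_nhds hz
    have hn2 : closedPolydisc 2 ∈ nhds z := Filter.mem_of_superset hn (polydisc_sub 2)
    have hd := (hhol.differentiableAt hn).hasFDerivAt
    have hd2 := (hd.restrictScalars ℝ).fderiv
    simp only [fderivWithin_of_mem_nhds hn2, hd2]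
    simp
  have hv : ∀ u : Fin 2 → ℂ, ContinuousOn (fun z => fderivWithin ℝ φ (closedPolydisc 2) z u)
      (closedPolydisc 2) := fun u => hc.clm_apply continuousOn_const
  have hv2 : ContinuousOn (fun z => Complex.I • fderivWithin ℝ φ (closedPolydisc 2) z v)
      (closedPolydisc 2) := (hv v).const_smul Complex.I
  exact h1.of_subset_closure (hv _) hv2 (polydisc_sub 2)
    (closure_polydisc 2).ge hz

lemma D_smul (hhol : DifferentiableOn ℂ φ (polydisc 2))
    (hsm : ContDiffOn ℝ 2 φ (closedPolydisc 2)) {z : Fin 2 → ℂ} (hz : z ∈ closedPolydisc 2)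
    (c : ℂ) (v : Fin 2 → ℂ) :
    fderivWithin ℝ φ (closedPolydisc 2) z (c • v) =
      c • fderivWithin ℝ φ (closedPolydisc 2) z v := by
  have h : ∀ u : Fin 2 → ℂ, c • u = c.re • u + c.im • (Complex.I • u) := by
    intro u
    ext i
    simp only [Pi.smul_apply, Pi.add_apply, smul_eq_mul, Complex.real_smul]
    conv_lhs => rw [← Complex.re_add_im c]
    ring
  rw [h, h, map_add, map_smul, map_smul, D_I hhol hsm hz]

lemma D_expand (hhol : DifferentiableOn ℂ φ (polydisc 2))
    (hsm : ContDiffOn ℝ 2 φ (closedPolydisc 2)) {z : Fin 2 → ℂ} (hz : z ∈ closedPolydisc 2)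
    (u : Fin 2 → ℂ) (i : Fin 2) :
    fderivWithin ℝ φ (closedPolydisc 2) z u i =
      u 0 * jacEntry 2 φ z i 0 + u 1 * jacEntry 2 φ z i 1 := by
  have h : u = u 0 • Pi.single 0 (1:ℂ) + u 1 • Pi.single 1 (1:ℂ) := by
    ext k; fin_cases k <;> simp
  conv_lhs => rw [h]
  rw [map_add, D_smul hhol hsm hz, D_smul hhol hsm hz]
  rfl

lemma hasDerivAt_ee (t : ℝ) : HasDerivAt ee (2 * Real.pi * Complex.I * ee t) t := by
  unfold ee
  have h1 : HasDerivAt (fun t : ℝ => 2 * Real.pi * Complex.I * (t : ℂ))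
      (2 * Real.pi * Complex.I * 1) t :=
    (Complex.ofRealCLM.hasDerivAt (x := t)).const_mul _
  have := h1.cexp
  convert this using 1
  ring

lemma fderiv_Phi (hhol : DifferentiableOn ℂ φ (polydisc 2))
    (hsm : ContDiffOn ℝ 2 φ (closedPolydisc 2)) (θ v : Fin 2 → ℝ) (i : Fin 2) :
    fderiv ℝ (fun θ => φ (XX θ)) θ v i =
      2 * Real.pi * Complex.I * (jacEntry 2 φ (XX θ) i 0 * XX θ 0 * v 0
        + jacEntry 2 φ (XX θ) i 1 * XX θ 1 * v 1) := by
  have hX : HasFDerivAt XX (fderiv ℝ XX θ) θ :=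
    ((contDiff_XX (n := 1)).differentiable (by norm_num) θ).hasFDerivAt
  have hφ := ((hsm.differentiableOn (by norm_num)) (XX θ) (XX_mem_closed θ)).hasFDerivWithinAt
  have hc := hφ.comp_hasFDerivAt θ hX (Filter.Eventually.of_forall XX_mem_closed)
  have hXv : ∀ j, fderiv ℝ XX θ v j = 2 * Real.pi * Complex.I * XX θ j * v j := by
    intro j
    have h1 : HasFDerivAt (fun θ : Fin 2 → ℝ => XX θ j) _ θ :=
      ((hasDerivAt_ee (θ j)).hasFDerivAt).comp θ
        ((ContinuousLinearMap.proj (R := ℝ) (φ := fun _ : Fin 2 => ℝ) j).hasFDerivAt (x := θ))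
    have h2 := (hasFDerivAt_pi'.1 hX j).unique h1
    have h3 := congrArg (fun L => L v) h2
    simp only [ContinuousLinearMap.comp_apply, ContinuousLinearMap.proj_apply] at h3
    rw [h3]
    simp [XX]
    ring
  have hf := hc.fderiv
  have : (φ ∘ XX) = fun θ => φ (XX θ) := rfl
  rw [this] at hf
  rw [hf, ContinuousLinearMap.comp_apply, D_expand hhol hsm (XX_mem_closed θ), hXv, hXv]
  ring

end basics


section contact

variable {φ : (Fin 2 → ℂ) → (Fin 2 → ℂ)}

/-- normalized Jacobian entries -/
def bb (φ : (Fin 2 → ℂ) → (Fin 2 → ℂ)) (θ : Fin 2 → ℝ) (i j : Fin 2) : ℂ :=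
  (starRingEnd ℂ) (φ (XX θ) i) * jacEntry 2 φ (XX θ) i j * XX θ j

lemma conj_fderiv (hhol : DifferentiableOn ℂ φ (polydisc 2))
    (hsm : ContDiffOn ℝ 2 φ (closedPolydisc 2)) (θ v : Fin 2 → ℝ) (i : Fin 2) :
    (starRingEnd ℂ) (φ (XX θ) i) * fderiv ℝ (fun θ => φ (XX θ)) θ v i =
      2 * Real.pi * Complex.I * (bb φ θ i 0 * v 0 + bb φ θ i 1 * v 1) := by
  rw [fderiv_Phi hhol hsm]; unfold bb; ring

lemma fderiv_clm (hsm : ContDiffOn ℝ 2 φ (closedPolydisc 2)) (θ : Fin 2 → ℝ) (i : Fin 2)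
    (c : ℂ) (L : ℂ →L[ℝ] ℝ) :
    HasFDerivAt (fun θ => L (c * φ (XX θ) i))
      (L.comp ((ContinuousLinearMap.mul ℝ ℂ c).comp
        ((ContinuousLinearMap.proj (R := ℝ) (φ := fun _ : Fin 2 => ℂ) i).comp
          (fderiv ℝ (fun θ => φ (XX θ)) θ)))) θ := by
  have h := ((contDiff_Phi hsm).differentiable (by norm_num) θ).hasFDerivAt
  have h2 := hasFDerivAt_pi'.1 h i
  exact L.hasFDerivAt.comp θ (((ContinuousLinearMap.mul ℝ ℂ c).hasFDerivAt).comp θ h2)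

lemma bb_im (hhol : DifferentiableOn ℂ φ (polydisc 2))
    (hsm : ContDiffOn ℝ 2 φ (closedPolydisc 2))
    (hmap : ∀ z ∈ polydisc 2, φ z ∈ polydisc 2) {θ : Fin 2 → ℝ} (hθ : φ (XX θ) ∈ torus 2)
    (i j : Fin 2) : (bb φ θ i j).im = 0 := by
  have hm : IsLocalMax (fun θ' => Complex.reCLM ((starRingEnd ℂ) (φ (XX θ) i) * φ (XX θ') i)) θ := by
    refine Filter.Eventually.of_forall fun θ' => ?_
    have h1 : (starRingEnd ℂ) (φ (XX θ) i) * φ (XX θ) i = 1 := by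
      rw [mul_comm, Complex.mul_conj, Complex.normSq_eq_norm_sq, hθ i]; simp
    simp only [h1, Complex.reCLM_apply, Complex.one_re]
    refine (Complex.re_le_norm _).trans ?_
    rw [norm_mul, RCLike.norm_conj, hθ i, one_mul]
    exact map_closed hsm hmap _ (XX_mem_closed θ') i
  have h0 := hm.hasFDerivAt_eq_zero (fderiv_clm hsm θ i _ _)
  have h1 := congrArg (fun L => L (Pi.single j 1)) h0
  simp only [ContinuousLinearMap.comp_apply, ContinuousLinearMap.proj_apply,
    ContinuousLinearMap.mul_apply', conj_fderiv hhol hsm, Complex.reCLM_apply,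
    ContinuousLinearMap.zero_apply] at h1
  have hp := Real.pi_ne_zero
  fin_cases j <;> simpa [Complex.mul_re, Complex.mul_im, hp] using h1

lemma bb_det (θ : Fin 2 → ℝ) :
    bb φ θ 0 0 * bb φ θ 1 1 - bb φ θ 0 1 * bb φ θ 1 0 =
      (starRingEnd ℂ) (φ (XX θ) 0) * (starRingEnd ℂ) (φ (XX θ) 1) * XX θ 0 * XX θ 1 *
        Matrix.det (Matrix.of fun i j => jacEntry 2 φ (XX θ) i j) := by
  rw [Matrix.det_fin_two]
  simp only [Matrix.of_apply, bb]
  ring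

lemma bb_det_re (hhol : DifferentiableOn ℂ φ (polydisc 2))
    (hsm : ContDiffOn ℝ 2 φ (closedPolydisc 2))
    (hmap : ∀ z ∈ polydisc 2, φ z ∈ polydisc 2) {θ : Fin 2 → ℝ} (hθ : φ (XX θ) ∈ torus 2) :
    (bb φ θ 0 0).re * (bb φ θ 1 1).re - (bb φ θ 0 1).re * (bb φ θ 1 0).re = 0 ↔
      Matrix.det (Matrix.of fun i j => jacEntry 2 φ (XX θ) i j) = 0 := by
  have hb : ∀ i j, (((bb φ θ i j).re : ℝ) : ℂ) = bb φ θ i j := fun i j => by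
    apply Complex.ext <;> simp [bb_im hhol hsm hmap hθ]
  have h1 := bb_det (φ := φ) θ
  rw [← hb 0 0, ← hb 0 1, ← hb 1 0, ← hb 1 1] at h1
  have hn : ∀ i, (starRingEnd ℂ) (φ (XX θ) i) ≠ 0 := fun i => by
    rw [← norm_ne_zero_iff, RCLike.norm_conj, hθ i]; exact one_ne_zero
  have hx : ∀ i, XX θ i ≠ 0 := fun i => ee_ne_zero _
  rw [← Complex.ofReal_eq_zero]
  push_cast
  rw [h1]
  simp [hn, hx]

lemma Psi_det (hhol : DifferentiableOn ℂ φ (polydisc 2))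
    (hsm : ContDiffOn ℝ 2 φ (closedPolydisc 2))
    (hmap : ∀ z ∈ polydisc 2, φ z ∈ polydisc 2) {θ : Fin 2 → ℝ} (hθ : φ (XX θ) ∈ torus 2)
    (hd : Matrix.det (Matrix.of fun i j => jacEntry 2 φ (XX θ) i j) ≠ 0) :
    (fderiv ℝ (fun θ' : Fin 2 → ℝ =>
      (fun i => ((starRingEnd ℂ) (φ (XX θ) i) * φ (XX θ') i).im : Fin 2 → ℝ)) θ).det ≠ 0 := by
  have hp := Real.pi_ne_zero
  have h := hasFDerivAt_pi.2 fun i : Fin 2 => fderiv_clm hsm θ i ((starRingEnd ℂ) (φ (XX θ) i))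
    Complex.imCLM
  have h2 := h.fderiv
  simp only [Complex.imCLM_apply] at h2
  rw [h2]
  intro h0
  apply hd
  rw [← bb_det_re hhol hsm hmap hθ]
  rw [ContinuousLinearMap.det, ← LinearMap.det_toMatrix', Matrix.det_fin_two] at h0
  simp only [LinearMap.toMatrix'_apply, ContinuousLinearMap.coe_coe, ContinuousLinearMap.pi_apply,
    ContinuousLinearMap.comp_apply, ContinuousLinearMap.proj_apply,
    ContinuousLinearMap.mul_apply', conj_fderiv hhol hsm, Complex.imCLM_apply] at h0
  simp [Complex.mul_re, Complex.mul_im, bb_im hhol hsm hmap hθ] at h0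
  have : (2 * Real.pi) ^ 2 * ((bb φ θ 0 0).re * (bb φ θ 1 1).re - (bb φ θ 0 1).re * (bb φ θ 1 0).re) = 0 := by
    linear_combination h0
  rcases mul_eq_zero.1 this with h | h
  · exact absurd h (by positivity)
  · exact h

end contact


lemma fatou_le {α : Type*} [MeasurableSpace α] {μ : Measure α} {F : ℕ → α → ℝ≥0∞} {f : α → ℝ≥0∞}
    {C : ℝ≥0∞} (hF : ∀ n, Measurable (F n))
    (hlim : ∀ a, Filter.Tendsto (fun n => F n a) Filter.atTop (nhds (f a)))
    (hC : ∀ n, ∫⁻ a, F n a ∂μ ≤ C) : ∫⁻ a, f a ∂μ ≤ C := by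
  have h1 : ∫⁻ a, f a ∂μ = ∫⁻ a, Filter.liminf (fun n => F n a) Filter.atTop ∂μ :=
    lintegral_congr fun a => (hlim a).liminf_eq.symm
  rw [h1]
  refine (lintegral_liminf_le hF).trans ?_
  refine Filter.liminf_le_of_le (by isBoundedDefault) fun b hb => ?_
  obtain ⟨n, hn⟩ := hb.exists
  exact hn.trans (hC n)

/-- A sequence of radii tending to one. -/
def rho (n : ℕ) : ℝ := 1 - 1 / ((n : ℝ) + 2)

lemma rho_mem (n : ℕ) : rho n ∈ Ico (1/2 : ℝ) 1 := by
  unfold rho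
  have h : (0:ℝ) ≤ n := Nat.cast_nonneg n
  have h1 : 1 / ((n : ℝ) + 2) ≤ 1 / 2 := one_div_le_one_div_of_le (by norm_num) (by linarith)
  have h2 : 0 < 1 / ((n : ℝ) + 2) := by positivity
  constructor <;> linarith

lemma rho_tendsto : Filter.Tendsto rho Filter.atTop (nhds 1) := by
  unfold rho
  have h : Filter.Tendsto (fun n : ℕ => 1 / ((n : ℝ) + 2)) Filter.atTop (nhds 0) :=
    tendsto_const_nhds.div_atTop (Filter.tendsto_atTop_add_const_right _ _ tendsto_natCast_atTop_atTop)
  simpa using h.const_sub 1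

lemma dil_mem {R : ℝ} (h0 : 0 ≤ R) (h1 : R < 1) {z : Fin 2 → ℂ} (hz : z ∈ closedPolydisc 2) :
    (fun j => (R:ℂ) * z j) ∈ polydisc 2 := by
  intro j
  have := hz j
  rw [norm_mul, Complex.norm_real, Real.norm_eq_abs, abs_of_nonneg h0]
  nlinarith [norm_nonneg (z j)]

lemma tendsto_dilate {X : Type*} [TopologicalSpace X] {g : (Fin 2 → ℂ) → X}
    {z : Fin 2 → ℂ} (hg : ContinuousWithinAt g (closedPolydisc 2) z)
    (hz : z ∈ closedPolydisc 2) :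
    Filter.Tendsto (fun n => g (fun j => ((rho n : ℝ):ℂ) * z j)) Filter.atTop (nhds (g z)) := by
  refine Filter.Tendsto.comp hg ?_
  refine tendsto_nhdsWithin_iff.2 ⟨?_, Filter.Eventually.of_forall fun n =>
    polydisc_sub 2 (dil_mem (by linarith [(rho_mem n).1]) (rho_mem n).2 hz)⟩
  rw [tendsto_pi_nhds]
  intro j
  have h : Filter.Tendsto (fun n => ((rho n : ℝ):ℂ)) Filter.atTop (nhds ((1:ℝ):ℂ)) :=
    (Complex.continuous_ofReal.tendsto 1).comp rho_tendsto
  simpa using h.mul_const (z j)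

lemma mean2 {u : (Fin 2 → ℂ) → ℂ} (hu : DifferentiableOn ℂ u (closedPolydisc 2))
    (h0 : ∀ z ∈ closedPolydisc 2, 0 ≤ (u z).re) :
    ∫⁻ θ in cube, ENNReal.ofReal (u (XX θ)).re = ENNReal.ofReal (u 0).re := by
  have hm : Measurable fun θ => ENNReal.ofReal (u (XX θ)).re :=
    (Complex.measurable_re.comp (cont_F_XX hu.continuousOn).measurable).ennreal_ofReal
  rw [cube_lintegral hm]
  simp only [XX_vec]
  have hmem : ∀ a b : ℂ, ‖a‖ ≤ 1 → ‖b‖ ≤ 1 → ![a, b] ∈ closedPolydisc 2 := by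
    intro a b ha hb j
    fin_cases j
    · exact ha
    · exact hb
  have h1 : ∀ x : ℝ, ∫⁻ y in Icc (0:ℝ) 1, ENNReal.ofReal (u ![ee x, ee y]).re =
      ENNReal.ofReal (u ![ee x, 0]).re := fun x =>
    posmean (slice1 hu (norm_ee x).le) fun t => h0 _ (hmem _ _ (norm_ee x).le (norm_ee t).le)
  simp only [h1]
  have h2 := posmean (slice0 hu (b := 0) (by simp)) fun t => h0 _ (hmem _ _ (norm_ee t).le (by simp))
  rw [h2]
  congr 3
  ext i; fin_cases i <;> rfl

section suff

variable {φ : (Fin 2 → ℂ) → (Fin 2 → ℂ)}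

lemma R_norm {R : ℝ} (hR : R ∈ Ico (1/2 : ℝ) 1) {w : ℂ} (hw : ‖w‖ ≤ 1) : ‖(R:ℂ) * w‖ < 1 := by
  have := hR.1
  rw [norm_mul, Complex.norm_real, Real.norm_eq_abs, abs_of_nonneg (by linarith)]
  nlinarith [norm_nonneg w, hR.2]

lemma mean_bound (hhol : DifferentiableOn ℂ φ (polydisc 2))
    (hsm : ContDiffOn ℝ 2 φ (closedPolydisc 2))
    (hmap : ∀ z ∈ polydisc 2, φ z ∈ polydisc 2) (k : Fin 2) {R : ℝ} (hR : R ∈ Ico (1/2 : ℝ) 1)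
    {η : ℂ} (hη : ‖η‖ = 1) :
    ∫⁻ θ in cube, ENNReal.ofReal (PK ((R:ℂ) * φ (XX θ) k) η) ≤
      ENNReal.ofReal (2 / (1 - ‖φ 0 k‖)) := by
  have hmc := map_closed hsm hmap
  set f : (Fin 2 → ℂ) → ℂ := fun z => (η + R * φ z k) / (η - R * φ z k) with hf
  have hne : ∀ z ∈ closedPolydisc 2, η - R * φ z k ≠ 0 := by
    intro z hz h
    have h1 := R_norm hR (hmc z hz k)
    rw [← sub_eq_zero.1 h, hη] at h1
    exact lt_irrefl _ h1
  have hφk : DifferentiableOn ℂ (fun z => φ z k) (polydisc 2) := differentiableOn_pi.1 hhol k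
  have hφc : ContinuousOn (fun z => φ z k) (closedPolydisc 2) :=
    continuousOn_pi.1 hsm.continuousOn k
  have hfd : DifferentiableOn ℂ f (polydisc 2) := by
    have hinv : DifferentiableOn ℂ (fun z => (η - R * φ z k)⁻¹) (polydisc 2) :=
      ((differentiableOn_const η).sub (hφk.const_mul _)).inv
        fun z hz => hne z (polydisc_sub 2 hz)
    have := ((differentiableOn_const η).add (hφk.const_mul (R:ℂ))).mul hinv
    exact this
  have hfc : ContinuousOn f (closedPolydisc 2) :=
    (continuousOn_const.add (continuousOn_const.mul hφc)).div
      (continuousOn_const.sub (continuousOn_const.mul hφc)) hne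
  have hre : ∀ z, (f z).re = PK ((R:ℂ) * φ z k) η := fun z => (PK_eq_re hη).symm
  simp only [← hre]
  have h0k : ‖φ 0 k‖ < 1 := hmap 0 (fun j => by simp) k
  refine fatou_le (F := fun n θ => ENNReal.ofReal (f (fun j => ((rho n : ℝ):ℂ) * XX θ j)).re)
    ?_ ?_ ?_
  · intro n
    have hd := diff_dilate hfd (R := rho n) (by linarith [(rho_mem n).1]) (rho_mem n).2
    exact (Complex.measurable_re.comp (cont_F_XX hd.continuousOn).measurable).ennreal_ofReal
  · intro θ
    have h1 := tendsto_dilate (hfc (XX θ) (XX_mem_closed θ)) (XX_mem_closed θ)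
    exact (ENNReal.continuous_ofReal.tendsto _).comp ((Complex.continuous_re.tendsto _).comp h1)
  · intro n
    have hr0 : 0 ≤ rho n := by linarith [(rho_mem n).1]
    have hd := diff_dilate hfd (R := rho n) hr0 (rho_mem n).2
    have h1 := mean2 hd fun z hz => by
      rw [hre]
      exact PK_nonneg (R_norm hR (hmc _ (polydisc_sub 2 (dil_mem hr0 (rho_mem n).2 hz)) k)).le
    rw [h1, hre]
    apply ENNReal.ofReal_le_ofReal
    have h3 : (fun j : Fin 2 => ((rho n : ℝ):ℂ) * (0 : Fin 2 → ℂ) j) = 0 := by ext; simp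
    rw [h3]
    refine (PK_le hη (R_norm hR h0k.le)).trans ?_
    have h4 : ‖(R:ℂ) * φ 0 k‖ ≤ ‖φ 0 k‖ := by
      have := hR.1
      rw [norm_mul, Complex.norm_real, Real.norm_eq_abs, abs_of_nonneg (by linarith)]
      nlinarith [norm_nonneg (φ 0 k), hR.2]
    exact div_le_div_of_nonneg_left (by norm_num) (by linarith) (by linarith)

lemma noncontact (hhol : DifferentiableOn ℂ φ (polydisc 2))
    (hsm : ContDiffOn ℝ 2 φ (closedPolydisc 2))
    (hmap : ∀ z ∈ polydisc 2, φ z ∈ polydisc 2) (i k : Fin 2) {θ₀ : Fin 2 → ℝ}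
    (hi : ‖φ (XX θ₀) i‖ < 1) :
    ∃ N ∈ nhds θ₀, ∃ C : NNReal, ∀ R ∈ Ico (1/2 : ℝ) 1, ∀ η ∈ torus 2,
      ∫⁻ θ in N ∩ cube, ENNReal.ofReal (PK ((R:ℂ) * φ (XX θ) i) (η i)) *
        ENNReal.ofReal (PK ((R:ℂ) * φ (XX θ) k) (η k)) ≤ C := by
  have hcont : Continuous fun θ => ‖φ (XX θ) i‖ :=
    ((continuous_apply i).comp (contDiff_Phi hsm).continuous).norm
  set c := (1 - ‖φ (XX θ₀) i‖) / 2 with hc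
  have hc0 : 0 < c := by rw [hc]; linarith
  have hopen : IsOpen {θ | ‖φ (XX θ) i‖ < 1 - c} := isOpen_lt hcont continuous_const
  refine ⟨{θ | ‖φ (XX θ) i‖ < 1 - c}, hopen.mem_nhds (by
    rw [mem_ofPred_eq, hc]; linarith), Real.toNNReal (2 / c) * Real.toNNReal (2 / (1 - ‖φ 0 k‖)), ?_⟩
  intro R hR η hη
  calc _ ≤ ∫⁻ θ in {θ | ‖φ (XX θ) i‖ < 1 - c} ∩ cube, ENNReal.ofReal (2 / c) *
        ENNReal.ofReal (PK ((R:ℂ) * φ (XX θ) k) (η k)) := by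
        refine setLIntegral_mono' (hopen.measurableSet.inter measurableSet_cube) fun θ hθ => ?_
        gcongr
        have h1 : ‖φ (XX θ) i‖ < 1 - c := hθ.1
        have h4 : ‖(R:ℂ) * φ (XX θ) i‖ ≤ ‖φ (XX θ) i‖ := by
          have := hR.1
          rw [norm_mul, Complex.norm_real, Real.norm_eq_abs, abs_of_nonneg (by linarith)]
          nlinarith [norm_nonneg (φ (XX θ) i), hR.2]
        refine (PK_le (hη i) (by linarith)).trans ?_
        exact div_le_div_of_nonneg_left (by norm_num) (by linarith) (by linarith)
    _ ≤ ∫⁻ θ in cube, ENNReal.ofReal (2 / c) *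
        ENNReal.ofReal (PK ((R:ℂ) * φ (XX θ) k) (η k)) := lintegral_mono_set inter_subset_right
    _ = ENNReal.ofReal (2 / c) * ∫⁻ θ in cube,
        ENNReal.ofReal (PK ((R:ℂ) * φ (XX θ) k) (η k)) :=
        lintegral_const_mul' _ _ ENNReal.ofReal_ne_top
    _ ≤ _ := by
        rw [ENNReal.coe_mul]
        gcongr
        · exact le_rfl
        · exact mean_bound hhol hsm hmap k hR (hη k)

lemma kernel_global (hhol : DifferentiableOn ℂ φ (polydisc 2))
    (hsm : ContDiffOn ℝ 2 φ (closedPolydisc 2))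
    (hmap : ∀ z ∈ polydisc 2, φ z ∈ polydisc 2)
    (hdet : ∀ ζ ∈ torus 2, φ ζ ∈ torus 2 →
        Matrix.det (Matrix.of fun i j => jacEntry 2 φ ζ i j) ≠ 0) :
    ∃ C : NNReal, ∀ R ∈ Ico (1/2 : ℝ) 1, ∀ η ∈ torus 2,
      ∫⁻ θ in cube, ENNReal.ofReal (PK ((R:ℂ) * φ (XX θ) 0) (η 0)) *
        ENNReal.ofReal (PK ((R:ℂ) * φ (XX θ) 1) (η 1)) ≤ C := by
  have hmc := map_closed hsm hmap
  suffices h : ∃ C : NNReal, ∀ R ∈ Ico (1/2 : ℝ) 1, ∀ η ∈ torus 2,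
      ∫⁻ θ in cube ∩ cube, ENNReal.ofReal (PK ((R:ℂ) * φ (XX θ) 0) (η 0)) *
        ENNReal.ofReal (PK ((R:ℂ) * φ (XX θ) 1) (η 1)) ≤ C by
    rwa [inter_self] at h
  refine isCompact_cube.induction_on (p := fun s => ∃ C : NNReal, ∀ R ∈ Ico (1/2 : ℝ) 1,
      ∀ η ∈ torus 2,
      ∫⁻ θ in s ∩ cube, ENNReal.ofReal (PK ((R:ℂ) * φ (XX θ) 0) (η 0)) *
        ENNReal.ofReal (PK ((R:ℂ) * φ (XX θ) 1) (η 1)) ≤ C) ?_ ?_ ?_ ?_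
  · exact ⟨0, fun R _ η _ => by simp⟩
  · rintro s t hst ⟨C, hC⟩
    exact ⟨C, fun R hR η hη => (lintegral_mono_set (inter_subset_inter_left _ hst)).trans
      (hC R hR η hη)⟩
  · rintro s t ⟨C, hC⟩ ⟨C', hC'⟩
    refine ⟨C + C', fun R hR η hη => ?_⟩
    rw [union_inter_distrib_right, ENNReal.coe_add]
    exact (lintegral_union_le _ _ _).trans (add_le_add (hC R hR η hη) (hC' R hR η hη))
  · intro θ₀ _
    suffices h : ∃ N ∈ nhds θ₀, ∃ C : NNReal, ∀ R ∈ Ico (1/2 : ℝ) 1, ∀ η ∈ torus 2,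
      ∫⁻ θ in N ∩ cube, ENNReal.ofReal (PK ((R:ℂ) * φ (XX θ) 0) (η 0)) *
        ENNReal.ofReal (PK ((R:ℂ) * φ (XX θ) 1) (η 1)) ≤ C by
      obtain ⟨N, hN, h⟩ := h
      exact ⟨N, mem_nhdsWithin_of_mem_nhds hN, h⟩
    by_cases ht : φ (XX θ₀) ∈ torus 2
    · obtain ⟨N, hN, C, hC⟩ := local_core (contDiff_Phi hsm)
        (fun θ i => hmc _ (XX_mem_closed θ) i) ht θ₀
        (Psi_det hhol hsm hmap ht (hdet _ (XX_mem_torus θ₀) ht))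
      exact ⟨N, hN, C.toNNReal, fun R hR η hη =>
        (lintegral_mono_set inter_subset_left).trans (hC R hR η hη)⟩
    · have : ∃ i, ‖φ (XX θ₀) i‖ ≠ 1 := by
        by_contra h
        push Not at h
        exact ht h
      obtain ⟨i, hi⟩ := this
      have hi' := lt_of_le_of_ne (hmc _ (XX_mem_closed θ₀) i) hi
      fin_cases i
      · exact noncontact hhol hsm hmap 0 1 hi'
      · obtain ⟨N, hN, C, hC⟩ := noncontact hhol hsm hmap 1 0 hi'
        refine ⟨N, hN, C, fun R hR η hη => ?_⟩
        simp only [mul_comm (ENNReal.ofReal (PK ((R:ℂ) * φ (XX _) 0) (η 0)))]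
        exact hC R hR η hη

end suff


lemma isCompact_closedPolydisc : IsCompact (closedPolydisc 2) := by
  rw [closedPolydisc_eq]; exact isCompact_closedBall _ _

lemma cont_dil {g : (Fin 2 → ℂ) → ℂ} (hc : ContinuousOn g (closedPolydisc 2)) {r : ℝ} (h0 : 0 ≤ r)
    (h1 : r < 1) : Continuous fun θ => g (fun j => (r:ℂ) * XX θ j) := by
  refine hc.comp_continuous (f := fun θ => (fun j => (r:ℂ) * XX θ j)) ?_ fun θ =>
    polydisc_sub 2 (dil_mem h0 h1 (XX_mem_closed θ))
  exact continuous_pi fun j => continuous_const.mul ((continuous_apply j).comp continuous_XX)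

lemma MM_le_bdry {g : (Fin 2 → ℂ) → ℂ} (hg : DifferentiableOn ℂ g (polydisc 2))
    (hc : ContinuousOn g (closedPolydisc 2)) {r : ℝ} (h0 : 0 < r) (h1 : r < 1) :
    MM g r ≤ ∫⁻ θ in cube, ENNReal.ofReal (‖g (XX θ)‖ ^ 2) := by
  obtain ⟨M, hM⟩ := isCompact_closedPolydisc.exists_bound_of_continuousOn hc
  have hlim : Filter.Tendsto (fun n => MM g (rho n)) Filter.atTop
      (nhds (∫⁻ θ in cube, ENNReal.ofReal (‖g (XX θ)‖ ^ 2))) := by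
    unfold MM
    refine tendsto_lintegral_of_dominated_convergence (fun _ => ENNReal.ofReal (M ^ 2)) ?_ ?_ ?_ ?_
    · intro n
      have := cont_dil hc (r := rho n) (by linarith [(rho_mem n).1]) (rho_mem n).2
      exact (this.norm.pow 2).measurable.ennreal_ofReal
    · intro n
      refine Filter.Eventually.of_forall fun θ => ?_
      apply ENNReal.ofReal_le_ofReal
      have := hM _ (polydisc_sub 2 (dil_mem (by linarith [(rho_mem n).1]) (rho_mem n).2
        (XX_mem_closed θ)))
      gcongr
    · rw [lintegral_const, Measure.restrict_apply_univ]
      exact ENNReal.mul_ne_top ENNReal.ofReal_ne_top isCompact_cube.measure_lt_top.ne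
    · refine Filter.Eventually.of_forall fun θ => ?_
      have h1 := tendsto_dilate (hc (XX θ) (XX_mem_closed θ)) (XX_mem_closed θ)
      exact (ENNReal.continuous_ofReal.tendsto _).comp (h1.norm.pow 2)
  refine ge_of_tendsto hlim ?_
  filter_upwards [rho_tendsto.eventually (lt_mem_nhds h1)] with n hn
  exact MM_mono hg h0 hn (rho_mem n).2

lemma sufficiency {φ : (Fin 2 → ℂ) → (Fin 2 → ℂ)} (hhol : DifferentiableOn ℂ φ (polydisc 2))
    (hsm : ContDiffOn ℝ 2 φ (closedPolydisc 2))
    (hmap : ∀ z ∈ polydisc 2, φ z ∈ polydisc 2)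
    (hdet : ∀ ζ ∈ torus 2, φ ζ ∈ torus 2 →
        Matrix.det (Matrix.of fun i j => jacEntry 2 φ ζ i j) ≠ 0) : bddHardy 2 φ := by
  have hmc := map_closed hsm hmap
  obtain ⟨C, hC⟩ := kernel_global hhol hsm hmap hdet
  refine ⟨(C:ℝ) + 1, by positivity, fun f hf => ?_⟩
  have hC1 : (C : ℝ≥0∞) ≤ ENNReal.ofReal ((C:ℝ) + 1) := by
    rw [← ENNReal.ofReal_coe_nnreal]
    exact ENNReal.ofReal_le_ofReal (by linarith)
  refine le_trans ?_ (mul_le_mul_left hC1 _)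
  rw [hardySq_eq (fun z => f (φ z))]
  refine iSup₂_le fun r hr => ?_
  have r0 : ∀ n, 0 ≤ rho n := fun n => by linarith [(rho_mem n).1]
  set g : ℕ → (Fin 2 → ℂ) → ℂ := fun n z => f (fun j => (rho n : ℂ) * ((rho n : ℂ) * φ z j)) with hg
  have hin : ∀ n z, z ∈ closedPolydisc 2 → (fun j => (rho n : ℂ) * φ z j) ∈ polydisc 2 :=
    fun n z hz => dil_mem (r0 n) (rho_mem n).2 (hmc z hz)
  have hgd : ∀ n, DifferentiableOn ℂ (g n) (polydisc 2) := by
    intro n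
    refine (diff_dilate hf (r0 n) (rho_mem n).2).comp
      (f := fun z => fun j => (rho n : ℂ) * φ z j) ?_ ?_
    · rw [differentiableOn_pi]
      intro j
      exact (differentiableOn_pi.1 hhol j).const_mul _
    · intro z hz
      exact polydisc_sub 2 (hin n z (polydisc_sub 2 hz))
  have hgc : ∀ n, ContinuousOn (g n) (closedPolydisc 2) := by
    intro n
    refine (diff_dilate hf (r0 n) (rho_mem n).2).continuousOn.comp
      (f := fun z => fun j => (rho n : ℂ) * φ z j) ?_ ?_
    · rw [continuousOn_pi]
      intro j
      exact continuousOn_const.mul (continuousOn_pi.1 hsm.continuousOn j)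
    · intro z hz
      exact polydisc_sub 2 (hin n z hz)
  refine fatou_le (F := fun n θ => ENNReal.ofReal (‖g n (fun j => (r:ℂ) * XX θ j)‖ ^ 2)) ?_ ?_ ?_
  · intro n
    exact ((cont_dil (hgc n) hr.1.le hr.2).norm.pow 2).measurable.ennreal_ofReal
  · intro θ
    have hp : φ (fun j => (r:ℂ) * XX θ j) ∈ polydisc 2 :=
      hmap _ (dil_mem hr.1.le hr.2 (XX_mem_closed θ))
    have hfc : ContinuousAt f (φ (fun j => (r:ℂ) * XX θ j)) :=
      (hf.differentiableAt ((isOpen_polydisc 2).mem_nhds hp)).continuousAt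
    have h1 : Filter.Tendsto (fun n => g n (fun j => (r:ℂ) * XX θ j)) Filter.atTop
        (nhds (f (φ (fun j => (r:ℂ) * XX θ j)))) := by
      refine Filter.Tendsto.comp hfc ?_
      rw [tendsto_pi_nhds]
      intro j
      have h : Filter.Tendsto (fun n => ((rho n : ℝ):ℂ)) Filter.atTop (nhds ((1:ℝ):ℂ)) :=
        (Complex.continuous_ofReal.tendsto 1).comp rho_tendsto
      simpa using h.mul (h.mul_const (φ (fun j => (r:ℂ) * XX θ j) j))
    exact (ENNReal.continuous_ofReal.tendsto _).comp (h1.norm.pow 2)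
  · intro n
    refine (MM_le_bdry (hgd n) (hgc n) hr.1 hr.2).trans ?_
    have hs := schur (diff_dilate hf (r0 n) (rho_mem n).2)
      (w := fun θ => fun j => (rho n : ℂ) * φ (XX θ) j)
      (continuous_pi fun j => continuous_const.mul
        ((continuous_apply j).comp (contDiff_Phi hsm).continuous))
      (fun θ => hin n _ (XX_mem_closed θ)) (C := C)
      (fun η hη => hC (rho n) (rho_mem n) η hη)
    refine hs.trans ?_
    gcongr
    rw [hardySq_eq]
    exact le_iSup₂_of_le (f := fun r (_ : r ∈ Ioo (0:ℝ) 1) => MM f r) (rho n)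
      ⟨by linarith [(rho_mem n).1], (rho_mem n).2⟩ le_rfl


lemma periodic_bound {G : (Fin 2 → ℂ) → ℝ≥0∞} (hG : Measurable fun θ => G (XX θ))
    {S : Set (Fin 2 → ℝ)} (hSm : MeasurableSet S) (hS : ∀ θ ∈ S, ∀ i, θ i ∈ Icc (0:ℝ) 2) :
    ∫⁻ θ in S, G (XX θ) ≤ 4 * ∫⁻ θ in cube, G (XX θ) := by
  let kv : (Fin 2 → Fin 2) → (Fin 2 → ℝ) := fun k i => ((k i : ℕ) : ℝ)
  let I : (Fin 2 → ℝ) → ℝ≥0∞ := cube.indicator fun θ => G (XX θ)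
  have hIm : Measurable I := hG.indicator measurableSet_cube
  have hXX : ∀ k θ, XX (θ - kv k) = XX θ := by
    intro k θ
    ext i
    simp only [XX, Pi.sub_apply, kv]
    rcases Fin.exists_fin_two.1 ⟨k i, rfl⟩ with h | h
    · rw [h]; simp
    · rw [h]
      have := ee_periodic (θ i - 1)
      simp only [sub_add_cancel] at this
      simp [this]
  have hpt : ∀ θ ∈ S, G (XX θ) ≤ ∑ k : Fin 2 → Fin 2, I (θ - kv k) := by
    intro θ hθ
    let k : Fin 2 → Fin 2 := fun i => if θ i ≤ 1 then 0 else 1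
    have hk : θ - kv k ∈ cube := by
      intro i _
      have := hS θ hθ i
      simp only [Pi.sub_apply, kv, k]
      split_ifs with h
      · simpa using ⟨this.1, h⟩
      · push Not at h
        simp only [Fin.val_one, Nat.cast_one]
        exact ⟨by linarith, by linarith [this.2]⟩
    calc G (XX θ) = I (θ - kv k) := by
          simp only [I, indicator_of_mem hk, hXX]
      _ ≤ _ := Finset.single_le_sum (f := fun k => I (θ - kv k)) (fun _ _ => zero_le) (Finset.mem_univ k)
  calc ∫⁻ θ in S, G (XX θ) ≤ ∫⁻ θ in S, ∑ k : Fin 2 → Fin 2, I (θ - kv k) :=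
        setLIntegral_mono' hSm hpt
    _ ≤ ∫⁻ θ, ∑ k : Fin 2 → Fin 2, I (θ - kv k) := setLIntegral_le_lintegral _ _
    _ = ∑ k : Fin 2 → Fin 2, ∫⁻ θ, I (θ - kv k) :=
        lintegral_finsetSum _ fun k _ => hIm.comp (measurable_id.sub_const _)
    _ = ∑ k : Fin 2 → Fin 2, ∫⁻ θ in cube, G (XX θ) := by
        refine Finset.sum_congr rfl fun k _ => ?_
        rw [lintegral_sub_right_eq_self I (kv k), lintegral_indicator measurableSet_cube]
    _ = _ := by simp

lemma taylor2 {Φ : (Fin 2 → ℝ) → (Fin 2 → ℂ)} (hΦ : ContDiff ℝ 2 Φ) (θ₀ : Fin 2 → ℝ) :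
    ∃ C : ℝ, 0 ≤ C ∧ ∃ ρ > 0, ∀ θ, ‖θ - θ₀‖ < ρ →
      ‖Φ θ - Φ θ₀ - fderiv ℝ Φ θ₀ (θ - θ₀)‖ ≤ C * ‖θ - θ₀‖ ^ 2 := by
  have h1 : ContDiff ℝ 1 (fderiv ℝ Φ) := hΦ.fderiv_right (by norm_num)
  obtain ⟨K, t, ht, hK⟩ := h1.contDiffAt.exists_lipschitzOnWith (x := θ₀)
  obtain ⟨ρ, hρ, hρt⟩ := Metric.mem_nhds_iff.1 ht
  refine ⟨K, K.coe_nonneg, ρ, hρ, fun θ hθ => ?_⟩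
  have hsub : ∀ x ∈ closedBall θ₀ ‖θ - θ₀‖, x ∈ t := fun x hx =>
    hρt (mem_ball.2 ((mem_closedBall.1 hx).trans_lt hθ))
  have := (convex_closedBall θ₀ ‖θ - θ₀‖).norm_image_sub_le_of_norm_hasFDerivWithin_le'
    (f := Φ) (f' := fderiv ℝ Φ) (φ := fderiv ℝ Φ θ₀) (C := K * ‖θ - θ₀‖) (x := θ₀) (y := θ)
    (fun x _ => (hΦ.differentiable (by norm_num) x).hasFDerivAt.hasFDerivWithinAt)
    (fun x hx => by
      have h := hK.norm_sub_le (hsub x hx) (hsub θ₀ (mem_closedBall_self (norm_nonneg _)))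
      refine h.trans ?_
      have : ‖x - θ₀‖ ≤ ‖θ - θ₀‖ := by rw [← dist_eq_norm]; exact mem_closedBall.1 hx
      gcongr)
    (mem_closedBall_self (norm_nonneg _)) (by rw [mem_closedBall, dist_eq_norm])
  calc _ ≤ _ := this
    _ = _ := by ring

/-- The linear map used to build the test box. -/
def TT (v : Fin 2 → ℝ) : (Fin 2 → ℝ) →ₗ[ℝ] (Fin 2 → ℝ) :=
  Matrix.toLin' !![v 0, - v 1; v 1, v 0]

lemma TT_apply (v x : Fin 2 → ℝ) : TT v x = x 0 • v + x 1 • ![- v 1, v 0] := by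
  unfold TT
  rw [Matrix.toLin'_apply]
  ext i
  fin_cases i <;> simp [Matrix.mulVec, dotProduct, Fin.sum_univ_two] <;> ring

lemma TT_det (v : Fin 2 → ℝ) : LinearMap.det (TT v) = v 0 ^ 2 + v 1 ^ 2 := by
  unfold TT
  rw [LinearMap.det_toLin', Matrix.det_fin_two]
  simp
  ring

/-- The test box. -/
def BX (θ₀ v : Fin 2 → ℝ) (ε : ℝ) : Set (Fin 2 → ℝ) :=
  (fun y => θ₀ + y) '' (TT v '' Set.univ.pi fun i : Fin 2 => Icc (-(![ε, ε ^ 2] i)) (![ε, ε ^ 2] i))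

lemma BX_vol (θ₀ v : Fin 2 → ℝ) {ε : ℝ} (hε : 0 < ε) :
    volume (BX θ₀ v ε) = ENNReal.ofReal ((v 0 ^ 2 + v 1 ^ 2) * (4 * ε ^ 3)) := by
  unfold BX
  rw [image_add_left, measure_preimage_add, Measure.addHaar_image_linearMap, TT_det, volume_pi_pi,
    Fin.prod_univ_two, Real.volume_Icc, Real.volume_Icc, abs_of_nonneg (by positivity),
    ← ENNReal.ofReal_mul (by simp; linarith), ← ENNReal.ofReal_mul (by positivity)]
  congr 1
  simp
  left
  ring

lemma BX_compact (θ₀ v : Fin 2 → ℝ) (ε : ℝ) : IsCompact (BX θ₀ v ε) :=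
  ((isCompact_univ_pi fun _ => isCompact_Icc).image
    (LinearMap.continuous_of_finiteDimensional (TT v))).image (continuous_const.add continuous_id)

lemma test_factor {η : ℂ} (hη : ‖η‖ = 1) {δ r t : ℝ} (hδ : δ ∈ Ioo (0:ℝ) 1) (hr : r ∈ Ioo (0:ℝ) 1) :
    ENNReal.ofReal (‖(1 - ((1 - δ : ℝ) : ℂ) * (starRingEnd ℂ) η * ((r:ℂ) * ee t))⁻¹‖ ^ 2) ≤
      ENNReal.ofReal δ⁻¹ * ENNReal.ofReal (PK ((((1 - δ) * r : ℝ) : ℂ) * ee t) η) := by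
  have hρ0 : 0 ≤ (1 - δ) * r := mul_nonneg (by linarith [hδ.2]) hr.1.le
  have hρ1 : (1 - δ) * r ≤ 1 - δ := by nlinarith [hδ.1, hδ.2, hr.1, hr.2]
  set w : ℂ := (((1 - δ) * r : ℝ) : ℂ) * ee t with hw
  have hwn : ‖w‖ = (1 - δ) * r := by
    rw [hw, norm_mul, norm_ee, mul_one, Complex.norm_real, Real.norm_eq_abs, abs_of_nonneg hρ0]
  have h1 : ‖1 - ((1 - δ : ℝ) : ℂ) * (starRingEnd ℂ) η * ((r:ℂ) * ee t)‖ = ‖η - w‖ := by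
    rw [← norm_one_sub_conj hη, ← RCLike.norm_conj (1 - (starRingEnd ℂ) w * η)]
    congr 1
    rw [map_sub, map_mul, hw]
    simp
    ring
  rw [← ENNReal.ofReal_mul (inv_nonneg.2 hδ.1.le)]
  apply ENNReal.ofReal_le_ofReal
  rw [norm_inv, h1, PK, hwn, inv_pow, div_eq_mul_inv, ← mul_assoc]
  refine le_mul_of_one_le_left (by positivity) ?_
  rw [inv_mul_eq_div, one_le_div hδ.1]
  nlinarith [hδ.1, hδ.2]

/-- The test function. -/
def TF (η : Fin 2 → ℂ) (δ : ℝ) (w : Fin 2 → ℂ) : ℂ :=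
  (1 - ((1 - δ : ℝ) : ℂ) * (starRingEnd ℂ) (η 0) * w 0)⁻¹ *
    (1 - ((1 - δ : ℝ) : ℂ) * (starRingEnd ℂ) (η 1) * w 1)⁻¹

lemma TF_diff {η : Fin 2 → ℂ} (hη : η ∈ torus 2) {δ : ℝ} (hδ : δ ∈ Ioo (0:ℝ) 1) :
    DifferentiableOn ℂ (TF η δ) (polydisc 2) := by
  have hne : ∀ i : Fin 2, ∀ w ∈ polydisc 2,
      1 - ((1 - δ : ℝ) : ℂ) * (starRingEnd ℂ) (η i) * w i ≠ 0 := by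
    intro i w hw h
    have h1 := congrArg norm (sub_eq_zero.1 h)
    have h2 : ‖w i‖ < 1 := hw i
    rw [norm_mul, norm_mul, RCLike.norm_conj, hη i, Complex.norm_real, Real.norm_eq_abs,
      abs_of_nonneg (by linarith [hδ.2]), norm_one] at h1
    nlinarith [hδ.1, hδ.2, norm_nonneg (w i)]
  have hd : ∀ i : Fin 2, DifferentiableOn ℂ
      (fun w : Fin 2 → ℂ => (1 - ((1 - δ : ℝ) : ℂ) * (starRingEnd ℂ) (η i) * w i)⁻¹) (polydisc 2) := by
    intro i
    refine DifferentiableOn.inv ?_ (hne i)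
    fun_prop
  exact (hd 0).mul (hd 1)

lemma TF_hardy {η : Fin 2 → ℂ} (hη : η ∈ torus 2) {δ : ℝ} (hδ : δ ∈ Ioo (0:ℝ) 1) :
    hardySq 2 (TF η δ) ≤ ENNReal.ofReal ((δ⁻¹) ^ 2) := by
  rw [hardySq_eq]
  refine iSup₂_le fun r hr => ?_
  have hρ0 : 0 ≤ (1 - δ) * r := mul_nonneg (by linarith [hδ.2]) hr.1.le
  have hρ1 : (1 - δ) * r < 1 := by nlinarith [hδ.1, hδ.2, hr.1, hr.2]
  have mP : ∀ η : ℂ, Measurable fun t : ℝ =>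
      ENNReal.ofReal δ⁻¹ * ENNReal.ofReal (PK ((((1 - δ) * r : ℝ) : ℂ) * ee t) η) := fun η =>
    (measurable_PK (measurable_const.mul continuous_ee.measurable) measurable_const).const_mul _
  calc MM (TF η δ) r ≤ ∫⁻ θ in cube,
        (fun t => ENNReal.ofReal δ⁻¹ * ENNReal.ofReal (PK ((((1 - δ) * r : ℝ) : ℂ) * ee t) (η 0))) (θ 0) *
        (fun t => ENNReal.ofReal δ⁻¹ * ENNReal.ofReal (PK ((((1 - δ) * r : ℝ) : ℂ) * ee t) (η 1))) (θ 1) := by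
        unfold MM
        refine lintegral_mono fun θ => ?_
        unfold TF
        rw [norm_mul, mul_pow, ENNReal.ofReal_mul (by positivity)]
        exact mul_le_mul' (test_factor (hη 0) hδ hr) (test_factor (hη 1) hδ hr)
    _ = ENNReal.ofReal δ⁻¹ * ENNReal.ofReal δ⁻¹ := by
        rw [prod_cube (mP _) (mP _), lintegral_const_mul' _ _ ENNReal.ofReal_ne_top,
          lintegral_const_mul' _ _ ENNReal.ofReal_ne_top, PK_int hρ0 hρ1 (hη 0),
          PK_int hρ0 hρ1 (hη 1), mul_one]
    _ = _ := by rw [sq, ENNReal.ofReal_mul (inv_nonneg.2 hδ.1.le)]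

lemma TF_lower {η w : Fin 2 → ℂ} (hη : η ∈ torus 2) {δ B : ℝ} (hδ : δ ∈ Ioo (0:ℝ) 1)
    (hw : w ∈ polydisc 2) (hB : ∀ i, ‖w i - η i‖ ≤ B * δ) :
    (((B + 1) * δ)⁻¹) ^ 4 ≤ ‖TF η δ w‖ ^ 2 := by
  have hne : ∀ i : Fin 2, 1 - ((1 - δ : ℝ) : ℂ) * (starRingEnd ℂ) (η i) * w i ≠ 0 := by
    intro i h
    have h1 := congrArg norm (sub_eq_zero.1 h)
    have h2 : ‖w i‖ < 1 := hw i
    rw [norm_mul, norm_mul, RCLike.norm_conj, hη i, Complex.norm_real, Real.norm_eq_abs,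
      abs_of_nonneg (by linarith [hδ.2]), norm_one] at h1
    nlinarith [hδ.1, hδ.2, norm_nonneg (w i)]
  have hB0 : 0 ≤ B := by
    have := (norm_nonneg _).trans (hB 0)
    exact nonneg_of_mul_nonneg_left this hδ.1
  have key : ∀ i : Fin 2, ((B + 1) * δ)⁻¹ ≤
      ‖(1 - ((1 - δ : ℝ) : ℂ) * (starRingEnd ℂ) (η i) * w i)⁻¹‖ := by
    intro i
    rw [norm_inv]
    apply inv_anti₀ (norm_pos_iff.2 (hne i))
    have h1 : (starRingEnd ℂ) (η i) * η i = 1 := by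
      rw [mul_comm, Complex.mul_conj, Complex.normSq_eq_norm_sq, hη i]; simp
    have h2 : 1 - ((1 - δ : ℝ) : ℂ) * (starRingEnd ℂ) (η i) * w i =
        (starRingEnd ℂ) (η i) * (η i - w i) + (δ : ℂ) * ((starRingEnd ℂ) (η i) * w i) := by
      push_cast
      linear_combination -h1
    rw [h2]
    refine (norm_add_le _ _).trans ?_
    rw [norm_mul, norm_mul, norm_mul, RCLike.norm_conj, hη i, Complex.norm_real, Real.norm_eq_abs,
      abs_of_pos hδ.1, norm_sub_rev]
    have h3 : ‖w i‖ < 1 := hw i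
    nlinarith [hB i, hδ.1]
  unfold TF
  have hp : 0 ≤ ((B + 1) * δ)⁻¹ := by have := hδ.1; positivity
  rw [norm_mul, mul_pow]
  calc _ = (((B + 1) * δ)⁻¹) ^ 2 * (((B + 1) * δ)⁻¹) ^ 2 := by ring
    _ ≤ _ := by
      gcongr
      · exact key 0
      · exact key 1


section necessity

variable {φ : (Fin 2 → ℂ) → (Fin 2 → ℂ)}

lemma lip_closed (hsm : ContDiffOn ℝ 2 φ (closedPolydisc 2)) :
    ∃ K : ℝ, 0 ≤ K ∧ ∀ z ∈ closedPolydisc 2, ∀ w ∈ closedPolydisc 2,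
      ‖φ w - φ z‖ ≤ K * ‖w - z‖ := by
  have hc := hsm.continuousOn_fderivWithin (uniqueDiff_closed 2) (by norm_num)
  obtain ⟨K, hK⟩ := isCompact_closedPolydisc.exists_bound_of_continuousOn hc
  have h0 : (0 : Fin 2 → ℂ) ∈ closedPolydisc 2 := fun j => by simp
  refine ⟨K, (norm_nonneg _).trans (hK 0 h0), fun z hz w hw => ?_⟩
  have hconv : Convex ℝ (closedPolydisc 2) := by
    rw [closedPolydisc_eq]; exact convex_closedBall _ _
  exact hconv.norm_image_sub_le_of_norm_fderivWithin_le (hsm.differentiableOn (by norm_num)) hK hz hw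

lemma exists_kernel (hhol : DifferentiableOn ℂ φ (polydisc 2))
    (hsm : ContDiffOn ℝ 2 φ (closedPolydisc 2))
    (hmap : ∀ z ∈ polydisc 2, φ z ∈ polydisc 2) {θ : Fin 2 → ℝ} (hθ : φ (XX θ) ∈ torus 2)
    (hd : Matrix.det (Matrix.of fun i j => jacEntry 2 φ (XX θ) i j) = 0) :
    ∃ v : Fin 2 → ℝ, v ≠ 0 ∧ fderiv ℝ (fun θ => φ (XX θ)) θ v = 0 := by
  rw [← bb_det_re hhol hsm hmap hθ] at hd
  have hb : ∀ i j, (((bb φ θ i j).re : ℝ) : ℂ) = bb φ θ i j := fun i j => by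
    apply Complex.ext <;> simp [bb_im hhol hsm hmap hθ]
  have hM : (Matrix.of fun i j => (bb φ θ i j).re : Matrix (Fin 2) (Fin 2) ℝ).det = 0 := by
    rw [Matrix.det_fin_two]; exact hd
  obtain ⟨v, hv, hv0⟩ := Matrix.exists_mulVec_eq_zero_iff.2 hM
  refine ⟨v, hv, ?_⟩
  ext i
  have h1 := congrFun hv0 i
  simp only [Matrix.mulVec, dotProduct, Fin.sum_univ_two, Matrix.of_apply, Pi.zero_apply] at h1
  have h2 := conj_fderiv hhol hsm θ v i
  rw [← hb i 0, ← hb i 1] at h2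
  have h3 : (((bb φ θ i 0).re : ℝ) : ℂ) * v 0 + (((bb φ θ i 1).re : ℝ) : ℂ) * v 1 = 0 := by
    exact_mod_cast h1
  rw [h3, mul_zero] at h2
  have hn : (starRingEnd ℂ) (φ (XX θ) i) ≠ 0 := by
    rw [← norm_ne_zero_iff, RCLike.norm_conj, hθ i]; exact one_ne_zero
  exact (mul_eq_zero.1 h2).resolve_left hn

lemma near_point (hsm : ContDiffOn ℝ 2 φ (closedPolydisc 2))
    {θ₀ v : Fin 2 → ℝ} (hv : fderiv ℝ (fun θ => φ (XX θ)) θ₀ v = 0) :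
    ∃ B : ℝ, 0 ≤ B ∧ ∃ ε₀ > 0, ∀ ε ∈ Ioo (0:ℝ) ε₀, ε < 1 → ∀ θ ∈ BX θ₀ v ε,
      ‖θ - θ₀‖ ≤ 1 / 4 ∧ ∀ i, ‖φ (fun j => ((1 - ε ^ 2 : ℝ) : ℂ) * XX θ j) i - φ (XX θ₀) i‖
        ≤ B * ε ^ 2 := by
  obtain ⟨C, hC, ρ, hρ, hT⟩ := taylor2 (contDiff_Phi hsm) θ₀
  obtain ⟨K, hK, hL⟩ := lip_closed hsm
  set D := fderiv ℝ (fun θ => φ (XX θ)) θ₀ with hD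
  set u : Fin 2 → ℝ := ![- v 1, v 0] with hu
  set M := ‖v‖ + ‖u‖ + 1 with hM
  have hM0 : 0 < M := by positivity
  refine ⟨‖D u‖ + C * M ^ 2 + K, by positivity, min (ρ / M) (1 / (4 * M)), by positivity, ?_⟩
  intro ε hε hε1 θ hθ
  have e0 := hε.1
  have e1 : ε * M < ρ := by
    have := hε.2.trans_le (min_le_left _ _)
    rwa [lt_div_iff₀ hM0] at this
  have e2 : ε * M ≤ 1 / 4 := by
    have := (hε.2.trans_le (min_le_right _ _)).le
    rw [le_div_iff₀ (by positivity)] at this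
    linarith
  obtain ⟨_, ⟨x, hx, rfl⟩, rfl⟩ := hθ
  have hx0 : |x 0| ≤ ε := abs_le.2 (hx 0 (mem_univ _))
  have hx1 : |x 1| ≤ ε ^ 2 := abs_le.2 (hx 1 (mem_univ _))
  have hx1' : |x 1| ≤ ε := hx1.trans (by nlinarith)
  have hsub : θ₀ + TT v x - θ₀ = TT v x := by abel
  have hn : ‖TT v x‖ ≤ ε * M := by
    rw [TT_apply]
    refine (norm_add_le _ _).trans ?_
    rw [norm_smul, norm_smul, Real.norm_eq_abs, Real.norm_eq_abs]
    have a := mul_le_mul_of_nonneg_right hx0 (norm_nonneg v)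
    have b := mul_le_mul_of_nonneg_right hx1' (norm_nonneg u)
    rw [hM]
    nlinarith
  refine ⟨by simp only [hsub]; linarith, fun i => ?_⟩
  simp only
  have t1 := hT (θ₀ + TT v x) (by rw [hsub]; linarith)
  rw [hsub] at t1
  have t2 : D (TT v x) = x 1 • D u := by
    rw [TT_apply, map_add, map_smul, map_smul, hv, smul_zero, zero_add]
  have t3 : ‖φ (XX (θ₀ + TT v x)) - φ (XX θ₀)‖ ≤ (‖D u‖ + C * M ^ 2) * ε ^ 2 := by
    have h1 : φ (XX (θ₀ + TT v x)) - φ (XX θ₀) =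
        (φ (XX (θ₀ + TT v x)) - φ (XX θ₀) - D (TT v x)) + D (TT v x) := by abel
    rw [h1]
    refine (norm_add_le _ _).trans ?_
    have h2 : ‖D (TT v x)‖ ≤ ε ^ 2 * ‖D u‖ := by
      rw [t2, norm_smul, Real.norm_eq_abs]; gcongr
    have h3 : C * ‖TT v x‖ ^ 2 ≤ C * (ε * M) ^ 2 := by gcongr
    calc _ ≤ C * (ε * M) ^ 2 + ε ^ 2 * ‖D u‖ := add_le_add (t1.trans h3) h2
      _ = _ := by ring
  have hr0 : 0 ≤ 1 - ε ^ 2 := by nlinarith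
  have hr1 : 1 - ε ^ 2 < 1 := by nlinarith
  have t4 := hL _ (XX_mem_closed (θ₀ + TT v x)) _
    (polydisc_sub 2 (dil_mem hr0 hr1 (XX_mem_closed (θ₀ + TT v x))))
  have t5 : ‖(fun j => ((1 - ε ^ 2 : ℝ) : ℂ) * XX (θ₀ + TT v x) j) - XX (θ₀ + TT v x)‖ ≤ ε ^ 2 := by
    rw [pi_norm_le_iff_of_nonneg (by positivity)]
    intro j
    have : ((1 - ε ^ 2 : ℝ) : ℂ) * XX (θ₀ + TT v x) j - XX (θ₀ + TT v x) j =
        ((-(ε ^ 2) : ℝ) : ℂ) * XX (θ₀ + TT v x) j := by push_cast; ring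
    rw [Pi.sub_apply, this, norm_mul, XX_mem_torus _ j, mul_one, Complex.norm_real,
      Real.norm_eq_abs, abs_neg, abs_of_nonneg (by positivity)]
  have t6 := t4.trans (mul_le_mul_of_nonneg_left t5 hK)
  calc _ ≤ ‖φ (fun j => ((1 - ε ^ 2 : ℝ) : ℂ) * XX (θ₀ + TT v x) j) - φ (XX θ₀)‖ :=
        norm_le_pi_norm (φ (fun j => ((1 - ε ^ 2 : ℝ) : ℂ) * XX (θ₀ + TT v x) j) - φ (XX θ₀)) i
    _ ≤ K * ε ^ 2 + (‖D u‖ + C * M ^ 2) * ε ^ 2 := by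
        refine le_trans ?_ (add_le_add t6 t3)
        have h1 : φ (fun j => ((1 - ε ^ 2 : ℝ) : ℂ) * XX (θ₀ + TT v x) j) - φ (XX θ₀) =
          (φ (fun j => ((1 - ε ^ 2 : ℝ) : ℂ) * XX (θ₀ + TT v x) j) - φ (XX (θ₀ + TT v x))) +
          (φ (XX (θ₀ + TT v x)) - φ (XX θ₀)) := by abel
        rw [h1]
        exact norm_add_le _ _
    _ = _ := by ring

lemma necessity (hhol : DifferentiableOn ℂ φ (polydisc 2))
    (hsm : ContDiffOn ℝ 2 φ (closedPolydisc 2))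
    (hmap : ∀ z ∈ polydisc 2, φ z ∈ polydisc 2) (hb : bddHardy 2 φ) :
    ∀ ζ ∈ torus 2, φ ζ ∈ torus 2 →
        Matrix.det (Matrix.of fun i j => jacEntry 2 φ ζ i j) ≠ 0 := by
  intro ζ hζ hη hd
  obtain ⟨C, hC, hbd⟩ := hb
  choose θ₀ hθ₀ hee using fun j => exists_ee (hζ j)
  have hXX : XX θ₀ = ζ := funext hee
  rw [← hXX] at hη hd
  obtain ⟨v, hv, hDv⟩ := exists_kernel hhol hsm hmap hη hd
  obtain ⟨B, hB, ε₀, hε₀, hnear⟩ := near_point hsm hDv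
  set d := v 0 ^ 2 + v 1 ^ 2 with hdd
  have hd0 : 0 < d := by
    have : v 0 ≠ 0 ∨ v 1 ≠ 0 := by
      by_contra h
      push Not at h
      exact hv (by ext i; fin_cases i; exacts [h.1, h.2])
    rcases this with h | h <;> positivity
  have main : ∀ ε ∈ Ioo (0:ℝ) ε₀, ε < 1 → d ≤ C * (B + 1) ^ 4 * ε := by
    intro ε hε hε1
    have e0 := hε.1
    have hδ : ε ^ 2 ∈ Ioo (0:ℝ) 1 := ⟨by positivity, by nlinarith⟩
    set r := 1 - ε ^ 2 with hr
    have hr01 : r ∈ Ioo (0:ℝ) 1 := ⟨by linarith [hδ.2], by linarith [hδ.1]⟩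
    set η := φ (XX θ₀) with hηd
    set f := TF η (ε ^ 2) with hf
    have hfd : DifferentiableOn ℂ f (polydisc 2) := TF_diff hη hδ
    have hgd : DifferentiableOn ℂ (fun z => f (φ z)) (polydisc 2) := hfd.comp hhol hmap
    let G : (Fin 2 → ℂ) → ℝ≥0∞ := fun z => ENNReal.ofReal (‖f (φ fun j => (r:ℂ) * z j)‖ ^ 2)
    have hGm : Measurable fun θ => G (XX θ) := by
      have := cont_F_XX (diff_dilate hgd hr01.1.le hr01.2).continuousOn
      exact (this.norm.pow 2).measurable.ennreal_ofReal
    have hSm := (BX_compact θ₀ v ε).measurableSet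
    have hP := periodic_bound hGm hSm fun θ hθ i => by
      have h1 := (hnear ε hε hε1 θ hθ).1
      have h2 := abs_le.1 ((norm_le_pi_norm (θ - θ₀) i).trans h1)
      have h3 := hθ₀ i
      rw [Pi.sub_apply] at h2
      exact ⟨by linarith [h2.1, h3.1], by linarith [h2.2, h3.2]⟩
    have hlow : volume (BX θ₀ v ε) * ENNReal.ofReal ((((B + 1) * ε ^ 2)⁻¹) ^ 4) ≤
        ∫⁻ θ in BX θ₀ v ε, G (XX θ) := by
      rw [mul_comm, ← setLIntegral_const]
      refine setLIntegral_mono' hSm fun θ hθ => ?_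
      apply ENNReal.ofReal_le_ofReal
      exact TF_lower hη hδ (hmap _ (dil_mem hr01.1.le hr01.2 (XX_mem_closed θ)))
        (hnear ε hε hε1 θ hθ).2
    have hup : ∫⁻ θ in cube, G (XX θ) ≤ ENNReal.ofReal C * ENNReal.ofReal (((ε ^ 2)⁻¹) ^ 2) := by
      refine le_trans ?_ ((hbd f hfd).trans (mul_le_mul_right (TF_hardy hη hδ) _))
      rw [hardySq_eq]
      exact le_iSup₂_of_le (f := fun r (_ : r ∈ Ioo (0:ℝ) 1) => MM (fun z => f (φ z)) r) r
        hr01 le_rfl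
    have hall := (hlow.trans hP).trans (mul_le_mul_right hup 4)
    rw [BX_vol θ₀ v e0, ← ENNReal.ofReal_mul (by positivity), ← ENNReal.ofReal_mul hC.le,
      show (4 : ℝ≥0∞) = ENNReal.ofReal 4 by simp, ← ENNReal.ofReal_mul (by norm_num),
      ENNReal.ofReal_le_ofReal_iff (by positivity)] at hall
    have hB1 : 0 < B + 1 := by linarith
    have q1 : d * (4 * ε ^ 3) * (((B + 1) * ε ^ 2)⁻¹) ^ 4 = 4 * d / ((B + 1) ^ 4 * ε ^ 5) := by
      field_simp
    have q2 : 4 * (C * ((ε ^ 2)⁻¹) ^ 2) = 4 * C / ε ^ 4 := by field_simp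
    rw [← hdd, q1, q2, div_le_div_iff₀ (by positivity) (by positivity)] at hall
    have q3 : (4 * ε ^ 4) * d ≤ (4 * ε ^ 4) * (C * (B + 1) ^ 4 * ε) := by
      calc _ = 4 * d * ε ^ 4 := by ring
        _ ≤ _ := hall
        _ = _ := by ring
    exact le_of_mul_le_mul_left q3 (by positivity)
  set A := C * (B + 1) ^ 4 with hA
  have hA0 : 0 < A := by rw [hA]; positivity
  set ε := min (min (ε₀ / 2) (1 / 2)) (d / (2 * A)) with hε
  have hεp : 0 < ε := by positivity
  have h1 : ε ≤ ε₀ / 2 := (min_le_left _ _).trans (min_le_left _ _)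
  have h2 : ε ≤ 1 / 2 := (min_le_left _ _).trans (min_le_right _ _)
  have h3 : ε ≤ d / (2 * A) := min_le_right _ _
  have h4 := main ε ⟨hεp, by linarith⟩ (by linarith)
  rw [le_div_iff₀ (by positivity)] at h3
  linarith

end necessity

theorem bidisc_hardy_criterion (φ : (Fin 2 → ℂ) → (Fin 2 → ℂ))
    (hhol : DifferentiableOn ℂ φ (polydisc 2))
    (hsm : ContDiffOn ℝ 2 φ (closedPolydisc 2))
    (hmap : ∀ z ∈ polydisc 2, φ z ∈ polydisc 2) :
    bddHardy 2 φ ↔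
      ∀ ζ ∈ torus 2, φ ζ ∈ torus 2 →
        Matrix.det (Matrix.of fun i j => jacEntry 2 φ ζ i j) ≠ 0 := by
  exact ⟨necessity hhol hsm hmap, sufficiency hhol hsm hmap⟩

end
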